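/- Suppose σ > 4/N, and σ < ∞ if N ≤ 4, σ < 4/(N-4) if N ≥ 5. Then: (i) if N ≥ 5 and 4/N < σ < 1, one has Ẽ_min(m) < -m for every m > 0; (ii) if σ > 4/N and σ ≥ 1, there exists m₀ > 0 such that Ẽ_min(m) = -m for every m ∈ (0, m₀]. -/

import Mathlib

open MeasureTheory Filter Topology

noncomputable section

abbrev Esp (N : ℕ) := EuclideanSpace ℝ (Fin N)

/-- Smooth compactly supported test functions. -/
def TestFun {N : ℕ} (φ : Esp N → ℂ) : Prop :=
  ContDiff ℝ (⊤ : ℕ∞) φ ∧ HasCompactSupport φ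

/-- Partial derivative in the `i`-th coordinate direction. -/
def pderivC {N : ℕ} (i : Fin N) (φ : Esp N → ℂ) : Esp N → ℂ :=
  fun x => fderiv ℝ φ x (EuclideanSpace.single i (1 : ℝ))

/-- The Laplacian of a (smooth) function. -/
def lapC {N : ℕ} (φ : Esp N → ℂ) : Esp N → ℂ :=
  fun x => ∑ i, pderivC i (pderivC i φ) x

/-- `v` is the weak `i`-th partial derivative of `u`. -/
def IsWeakPDeriv {N : ℕ} (u : Esp N → ℂ) (i : Fin N) (v : Esp N → ℂ) : Prop :=
  ∀ φ : Esp N → ℂ, TestFun φ → ∫ x, u x * pderivC i φ x = - ∫ x, v x * φ x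

/-- `v` is the weak Laplacian of `u`. -/
def IsWeakLap {N : ℕ} (u v : Esp N → ℂ) : Prop :=
  ∀ φ : Esp N → ℂ, TestFun φ → ∫ x, u x * lapC φ x = ∫ x, v x * φ x

/-- An element of the Sobolev space `H²(ℝ^N, ℂ)`: an `L²` function together with its
weak partial derivatives and its weak Laplacian, all in `L²`. -/
structure H2 (N : ℕ) where
  u : Esp N → ℂ
  grad : Fin N → Esp N → ℂ
  lapl : Esp N → ℂ
  u_mem : MemLp u 2 (volume : Measure (Esp N))
  grad_mem : ∀ i, MemLp (grad i) 2 (volume : Measure (Esp N))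
  lapl_mem : MemLp lapl 2 (volume : Measure (Esp N))
  grad_spec : ∀ i, IsWeakPDeriv u i (grad i)
  lapl_spec : IsWeakLap u lapl

namespace H2

variable {N : ℕ}

/-- `∫ |u|²`. -/
def massSq (U : H2 N) : ℝ := ∫ x, ‖U.u x‖ ^ 2

/-- `∫ |∇u|²`. -/
def gradSq (U : H2 N) : ℝ := ∑ i, ∫ x, ‖U.grad i x‖ ^ 2

/-- `∫ |Δu|²`. -/
def lapSq (U : H2 N) : ℝ := ∫ x, ‖U.lapl x‖ ^ 2

/-- `∫ |u|^{2σ+2}`. -/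
def pPow (σ : ℝ) (U : H2 N) : ℝ := ∫ x, ‖U.u x‖ ^ (2 * σ + 2)

/-- The energy `E(u) = ∫|Δu|² - 2∫|∇u|² - (1/(σ+1))∫|u|^{2σ+2}`. -/
def energy (σ : ℝ) (U : H2 N) : ℝ :=
  U.lapSq - 2 * U.gradSq - (1 / (σ + 1)) * U.pPow σ

/-- The square of the `H²` norm. -/
def h2NormSq (U : H2 N) : ℝ := U.massSq + U.gradSq + U.lapSq

/-- `u` does not vanish almost everywhere. -/
def Nontriv (U : H2 N) : Prop := ¬ (U.u =ᵐ[(volume : Measure (Esp N))] 0)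

end H2

/-- `E_min(m) = inf {E(u) : u ∈ H², ∫|u|² = m}`, with values in `EReal`. -/
def EminE (N : ℕ) (σ m : ℝ) : EReal :=
  ⨅ (U : H2 N) (_ : U.massSq = m), ((U.energy σ : ℝ) : EReal)

/-- The `L^p` norm (as a real number) of a function on `ℝ^N`. -/
def rLp {N : ℕ} (p : ℝ) (f : Esp N → ℂ) : ℝ :=
  (eLpNorm f (ENNReal.ofReal p) (volume : Measure (Esp N))).toReal


/-- The best constant `B(N,σ)` in the Gagliardo–Nirenberg–Sobolev inequality
`‖u‖_{L^{2σ+2}}^{2σ+2} ≤ B ‖Δu‖_{L²}^{Nσ/2} ‖u‖_{L²}^{2+2σ-Nσ/2}`. -/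
def GNconst (N : ℕ) (σ : ℝ) : ℝ :=
  sSup {r : ℝ | ∃ U : H2 N, U.Nontriv ∧
    r = U.pPow σ /
      (rLp 2 U.lapl ^ ((N : ℝ) * σ / 2) * rLp 2 U.u ^ (2 + 2 * σ - (N : ℝ) * σ / 2))}

/-- `k* = (σ+1)^{1/σ} B(N,σ)^{-1/σ}`. -/
def kstar (N : ℕ) (σ : ℝ) : ℝ := (σ + 1) ^ (1 / σ) * GNconst N σ ^ (-(1 / σ))

/-- Strong `H²` convergence of `v k (· + xs k)` to `U`. -/
def H2TendstoTrans {N : ℕ} (v : ℕ → H2 N) (xs : ℕ → Esp N) (U : H2 N) : Prop :=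
  Tendsto (fun k => eLpNorm (fun x => (v k).u (x + xs k) - U.u x) 2
      (volume : Measure (Esp N))) atTop (nhds 0) ∧
  (∀ i, Tendsto (fun k => eLpNorm (fun x => (v k).grad i (x + xs k) - U.grad i x) 2
      (volume : Measure (Esp N))) atTop (nhds 0)) ∧
  Tendsto (fun k => eLpNorm (fun x => (v k).lapl (x + xs k) - U.lapl x) 2
      (volume : Measure (Esp N))) atTop (nhds 0)

/-- `u` is a weak (`H^{-2}`) solution of `Δ²u + 2Δu + (1+c)u - |u|^{2σ}u = 0`. -/
def SolvesSW {N : ℕ} (σ c : ℝ) (U : H2 N) : Prop :=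
  ∀ φ : Esp N → ℂ, TestFun φ →
    (∫ x, U.lapl x * lapC φ x) + 2 * (∫ x, U.lapl x * φ x) +
        ((1 + c : ℝ) : ℂ) * (∫ x, U.u x * φ x) -
        (∫ x, ((‖U.u x‖ ^ (2 * σ) : ℝ) : ℂ) * U.u x * φ x) = 0

/-- `T_c(u) = ∫|Δu|² - 2∫|∇u|² + (1+c)∫|u|²`. -/
def Tfun {N : ℕ} (c : ℝ) (U : H2 N) : ℝ := U.lapSq - 2 * U.gradSq + (1 + c) * U.massSq

/-- `t(c) = inf {T_c(u) : ∫|u|^{2σ+2} = 1}`. -/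
def tmin (N : ℕ) (σ c : ℝ) : ℝ := sInf {r : ℝ | ∃ U : H2 N, U.pPow σ = 1 ∧ r = Tfun c U}

/-- The action `S_c(u) = E(u) + (1+c)‖u‖_{L²}² = T_c(u) - (1/(σ+1))∫|u|^{2σ+2}`. -/
def action {N : ℕ} (σ c : ℝ) (U : H2 N) : ℝ := U.energy σ + (1 + c) * U.massSq

/-- `D(u) = ∫|Δu|² - (Nσ/(4(σ+1)))(Nσ/2 - 1) ∫|u|^{2σ+2}`. -/
def Dfun {N : ℕ} (σ : ℝ) (U : H2 N) : ℝ :=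
  U.lapSq - (N : ℝ) * σ / (4 * (σ + 1)) * ((N : ℝ) * σ / 2 - 1) * U.pPow σ

/-- `φ_u(t) = E(u_t)` where `u_t(x) = t^{N/4} u(t^{1/2} x)`, i.e.
`φ_u(t) = t² ∫|Δu|² - 2t ∫|∇u|² - (t^{Nσ/2}/(σ+1)) ∫|u|^{2σ+2}`. -/
def phiFun {N : ℕ} (σ : ℝ) (U : H2 N) (t : ℝ) : ℝ :=
  t ^ 2 * U.lapSq - 2 * t * U.gradSq - t ^ ((N : ℝ) * σ / 2) / (σ + 1) * U.pPow σ

/-- The inflection point `t_{u,infl}`, the unique zero of `φ''_u`. -/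
def tInfl {N : ℕ} (σ : ℝ) (U : H2 N) : ℝ :=
  (8 * (σ + 1) * U.lapSq / ((N : ℝ) * σ * ((N : ℝ) * σ - 2) * U.pPow σ)) ^
    (2 / ((N : ℝ) * σ - 4))

/-- The open set `O = {u ≠ 0 : D(u) > 0 and φ'_u(t_{u,infl}) > 0}`. -/
def memO {N : ℕ} (σ : ℝ) (U : H2 N) : Prop :=
  U.Nontriv ∧ 0 < Dfun σ U ∧ 0 < deriv (phiFun σ U) (tInfl σ U)

/-- `Ẽ_min(m) = inf {E(u) : u ∈ O, ‖u‖_{L²}² = m}`. -/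
def tildeE (N : ℕ) (σ m : ℝ) : ℝ :=
  sInf {r : ℝ | ∃ U : H2 N, memO σ U ∧ U.massSq = m ∧ r = U.energy σ}

/-- The mass threshold `μ₀`. -/
def mu0 (N : ℕ) (σ : ℝ) : ℝ :=
  GNconst N σ ^ (-(1 / σ)) *
    ((N : ℝ) * σ / (4 * (σ + 1)) * ((N : ℝ) * σ / 2 - 1)) ^ (-(1 / σ)) *
    (((N : ℝ) * σ - 2) / ((N : ℝ) * σ - 4)) ^ (2 / σ - (N : ℝ) / 2)


/-! ### Part 1: integrals of kernels -/

lemma lint_radial (n : ℕ) (hn : 1 ≤ n) : ∃ c : ENNReal, c ≠ ⊤ ∧ ∀ f : ℝ → ENNReal, Measurable f →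
    ∫⁻ x : Esp n, f ‖x‖ = c * ∫⁻ y in Set.Ioi (0:ℝ), ENNReal.ofReal (y ^ (n - 1)) * f y := by
  have : Nonempty (Fin n) := ⟨⟨0, hn⟩⟩
  let μ : Measure (Esp n) := volume
  refine ⟨μ.toSphere Set.univ, measure_ne_top _ _, fun f hf => ?_⟩
  have hdim : Module.finrank ℝ (Esp n) = n := by simp
  calc
    ∫⁻ x, f (‖x‖) ∂μ = ∫⁻ x : ({(0)}ᶜ : Set (Esp n)), f (‖x.1‖) ∂(μ.comap (↑)) := by
      rw [lintegral_subtype_comap (measurableSet_singleton _).compl (fun x : Esp n ↦ f (‖x‖)),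
        restrict_compl_singleton]
    _ = ∫⁻ x, f x.2 ∂μ.toSphere.prod (.volumeIoiPow (Module.finrank ℝ (Esp n) - 1)) := by
      have := μ.measurePreserving_homeomorphUnitSphereProd.lintegral_comp_emb
        (Homeomorph.measurableEmbedding _) (f ∘ Subtype.val ∘ Prod.snd)
      simpa using this
    _ = μ.toSphere Set.univ * ∫⁻ x : Set.Ioi (0 : ℝ), f x ∂.volumeIoiPow (n - 1) := by
      rw [hdim, lintegral_prod _ (by fun_prop)]
      simp [mul_comm]
    _ = _ := by
      simp only [Measure.volumeIoiPow]
      rw [lintegral_withDensity_eq_lintegral_mul _ (by fun_prop) (by fun_prop)]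
      congr 1
      simp only [Pi.mul_apply]
      rw [lintegral_subtype_comap measurableSet_Ioi
        (fun a : ℝ ↦ ENNReal.ofReal (a ^ (n - 1)) * f a)]

/-- one-dimensional Cauchy kernel -/
lemma cauchy_int (a : ℝ) (ha : 0 < a) :
    ∫⁻ x : ℝ, ENNReal.ofReal (1 / (x ^ 2 + a ^ 2)) = ENNReal.ofReal (Real.pi / a) := by
  have h1 : ∀ x : ℝ, 1 / (x ^ 2 + a ^ 2) = (1 / a ^ 2) * (1 + (x * a⁻¹) ^ 2)⁻¹ := by
    intro x; field_simp; ring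
  have hi : Integrable (fun x : ℝ => 1 / (x ^ 2 + a ^ 2)) := by
    simp_rw [h1]
    exact (integrable_inv_one_add_sq.comp_mul_right' (inv_ne_zero ha.ne')).const_mul _
  rw [← ofReal_integral_eq_lintegral_ofReal hi (Eventually.of_forall fun x => by positivity)]
  congr 1
  simp_rw [h1]
  rw [integral_const_mul, Measure.integral_comp_mul_right (fun x : ℝ => (1 + x ^ 2)⁻¹),
    integral_univ_inv_one_add_sq]
  simp [abs_of_pos ha]
  field_simp

lemma cauchy_int_affine (b c a : ℝ) (hb : b ≠ 0) (ha : 0 < a) :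
    ∫⁻ x : ℝ, ENNReal.ofReal (1 / ((b * x + c) ^ 2 + a ^ 2)) = ENNReal.ofReal (Real.pi / (|b| * a)) := by
  have e1 : ∫⁻ x : ℝ, ENNReal.ofReal (1 / ((b * x + c) ^ 2 + a ^ 2))
      = ∫⁻ x : ℝ, ENNReal.ofReal (1 / ((b * x) ^ 2 + a ^ 2)) := by
    rw [← lintegral_add_right_eq_self (fun x : ℝ => ENNReal.ofReal (1 / ((b * x) ^ 2 + a ^ 2))) (c / b)]
    apply lintegral_congr
    intro x
    have : b * (x + c / b) = b * x + c := by field_simp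
    rw [this]
  rw [e1]
  have h1 : ∀ x : ℝ, ENNReal.ofReal (1 / ((b * x) ^ 2 + a ^ 2)) =
      ENNReal.ofReal (1 / b ^ 2) * ENNReal.ofReal (1 / (x ^ 2 + (a / |b|) ^ 2)) := by
    intro x
    rw [← ENNReal.ofReal_mul (by positivity)]
    congr 1
    rw [div_pow, sq_abs]
    field_simp
  simp_rw [h1]
  rw [lintegral_const_mul _ (by fun_prop), cauchy_int _ (by positivity),
    ← ENNReal.ofReal_mul (by positivity)]
  congr 1
  rw [← sq_abs b]
  have : |b| ≠ 0 := by simpa using hb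
  field_simp

/-- half-line quadratic substitution -/
lemma cauchy_int_sq (c a : ℝ) (ha : 0 < a) :
    ∫⁻ r in Set.Ioi (0:ℝ), ENNReal.ofReal (r / ((4 * Real.pi ^ 2 * r ^ 2 + c) ^ 2 + a ^ 2))
      ≤ ENNReal.ofReal (1 / a) := by
  have hp := Real.pi_pos
  let F : ℝ → ℝ := fun r => (1 / (8 * Real.pi ^ 2 * a)) * Real.arctan ((4 * Real.pi ^ 2 * r ^ 2 + c) / a)
  have hF : ∀ r, HasDerivAt F (r / ((4 * Real.pi ^ 2 * r ^ 2 + c) ^ 2 + a ^ 2)) r := by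
    intro r
    have h0 : HasDerivAt (fun r : ℝ => (4 * Real.pi ^ 2 * r ^ 2 + c) / a)
        ((4 * Real.pi ^ 2 * (2 * r)) / a) r := by
      have := (((hasDerivAt_pow 2 r).const_mul (4 * Real.pi ^ 2)).add_const c).div_const a
      simpa using this
    have := (h0.arctan).const_mul (1 / (8 * Real.pi ^ 2 * a))
    refine this.congr_deriv ?_
    have : 0 < (4 * Real.pi ^ 2 * r ^ 2 + c) ^ 2 + a ^ 2 := by positivity
    have : 0 < 1 + ((4 * Real.pi ^ 2 * r ^ 2 + c) / a) ^ 2 := by positivity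
    have : 0 < a ^ 2 + (4 * Real.pi ^ 2 * r ^ 2 + c) ^ 2 := by positivity
    field_simp
    ring
  have hlim : Tendsto F atTop (𝓝 ((1 / (8 * Real.pi ^ 2 * a)) * (Real.pi / 2))) := by
    apply Tendsto.const_mul
    have h := Real.tendsto_arctan_atTop.mono_right nhdsWithin_le_nhds
    apply h.comp
    apply Tendsto.atTop_div_const ha
    apply tendsto_atTop_add_const_right
    exact (tendsto_pow_atTop (by norm_num)).const_mul_atTop (by positivity)
  have hpos : ∀ r ∈ Set.Ioi (0:ℝ), 0 ≤ r / ((4 * Real.pi ^ 2 * r ^ 2 + c) ^ 2 + a ^ 2) := by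
    intro r hr
    have : (0:ℝ) < r := hr
    positivity
  have hIntg := integrableOn_Ioi_deriv_of_nonneg' (fun r _ => hF r) hpos hlim
  have hval := integral_Ioi_of_hasDerivAt_of_nonneg' (fun r _ => hF r) hpos hlim
  rw [← ofReal_integral_eq_lintegral_ofReal hIntg]
  · apply ENNReal.ofReal_le_ofReal
    rw [hval]
    have h2 := Real.neg_pi_div_two_lt_arctan ((4 * Real.pi ^ 2 * 0 ^ 2 + c) / a)
    have h3 : F 0 ≥ (1 / (8 * Real.pi ^ 2 * a)) * (-(Real.pi / 2)) := by
      apply mul_le_mul_of_nonneg_left _ (by positivity)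
      linarith
    have h4 : (1 / (8 * Real.pi ^ 2 * a)) * Real.pi ≤ 1 / a := by
      rw [div_mul_eq_mul_div, div_le_div_iff₀ (by positivity) ha]
      nlinarith [Real.pi_gt_three, mul_pos hp ha]
    linarith
  · exact (ae_restrict_iff' measurableSet_Ioi).2 (Eventually.of_forall hpos)

/-- The symbol `4π²|ξ|² - 1`. -/
def wt {N : ℕ} (x : Esp N) : ℝ := 4 * Real.pi ^ 2 * ‖x‖ ^ 2 - 1

lemma wt_cont {N : ℕ} : Continuous (wt (N := N)) := by unfold wt; fun_prop

/-- The shell. -/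
def Shell (N : ℕ) : Set (Esp N) := {x | |wt x| < 1 / 2}

lemma shell_meas (N : ℕ) : MeasurableSet (Shell N) :=
  measurableSet_lt (wt_cont.abs.measurable) measurable_const

lemma shell_norm {N : ℕ} {x : Esp N} (hx : x ∈ Shell N) : ‖x‖ ≤ 1 ∧ 1 / 2 ≤ 4 * Real.pi ^ 2 * ‖x‖ ^ 2 := by
  have h := abs_lt.1 (show |wt x| < 1 / 2 from hx)
  unfold wt at h
  constructor
  · have hp := Real.pi_gt_three
    by_contra hc
    push Not at hc
    have h1 : 9 < Real.pi ^ 2 := by nlinarith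
    have h2 : 1 < ‖x‖ ^ 2 := by nlinarith
    nlinarith
  · linarith

lemma shell_int (N : ℕ) (hN : 1 ≤ N) : ∃ C : ℝ, 0 < C ∧ ∀ a : ℝ, 0 < a →
    ∫⁻ x in Shell N, ENNReal.ofReal (1 / (wt x ^ 2 + a ^ 2)) ≤ ENNReal.ofReal (C / a) := by
  obtain ⟨c, hc, h⟩ := lint_radial N hN
  refine ⟨c.toReal * 1 + 1, by positivity, fun a ha => ?_⟩
  let f : ℝ → ENNReal := fun r => if r ≤ 1 then ENNReal.ofReal (1 / ((4 * Real.pi ^ 2 * r ^ 2 - 1) ^ 2 + a ^ 2)) else 0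
  have hf : Measurable f := Measurable.ite measurableSet_Iic (by fun_prop) measurable_const
  calc _ ≤ ∫⁻ x : Esp N, f ‖x‖ := by
        rw [← lintegral_indicator (shell_meas N)]
        apply lintegral_mono
        intro x
        by_cases hx : x ∈ Shell N
        · simp only [Set.indicator_of_mem hx, f, if_pos (shell_norm hx).1]
          exact le_rfl
        · simp [hx]
    _ = c * ∫⁻ y in Set.Ioi (0:ℝ), ENNReal.ofReal (y ^ (N - 1)) * f y := h f hf
    _ ≤ c * ∫⁻ y in Set.Ioi (0:ℝ), ENNReal.ofReal (1 / ((2 * Real.pi * y + (-1)) ^ 2 + a ^ 2)) := by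
        gcongr c * ?_
        apply setLIntegral_mono (by fun_prop)
        intro y hy
        have hy : (0:ℝ) < y := hy
        simp only [f]
        split_ifs with h1
        · rw [← ENNReal.ofReal_mul (by positivity)]
          apply ENNReal.ofReal_le_ofReal
          have e1 : y ^ (N - 1) ≤ 1 := pow_le_one₀ hy.le h1
          calc _ ≤ 1 * (1 / ((4 * Real.pi ^ 2 * y ^ 2 - 1) ^ 2 + a ^ 2)) := by gcongr
            _ ≤ _ := by
              rw [one_mul]
              apply one_div_le_one_div_of_le (by positivity)
              have : 0 < Real.pi * y := by positivity
              have e : 4 * Real.pi ^ 2 * y ^ 2 - 1 = (2 * Real.pi * y + (-1)) * (2 * (Real.pi * y) + 1) := by ring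
              rw [e, mul_pow]
              have : 1 ≤ (2 * (Real.pi * y) + 1) ^ 2 := by nlinarith
              nlinarith [sq_nonneg (2 * Real.pi * y + (-1))]
        · simp
    _ ≤ c * ∫⁻ y, ENNReal.ofReal (1 / ((2 * Real.pi * y + (-1)) ^ 2 + a ^ 2)) := by
        gcongr c * ?_
        exact setLIntegral_le_lintegral _ _
    _ = c * ENNReal.ofReal (Real.pi / (|2 * Real.pi| * a)) := by
        rw [cauchy_int_affine _ _ _ (by positivity) ha]
    _ ≤ ENNReal.ofReal c.toReal * ENNReal.ofReal (1 / a) := by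
        rw [ENNReal.ofReal_toReal hc]
        gcongr c * ENNReal.ofReal ?_
        rw [abs_of_pos (by positivity)]
        have := Real.pi_pos
        rw [div_le_div_iff₀ (by positivity) ha]
        nlinarith [mul_pos this ha]
    _ ≤ _ := by
        rw [← ENNReal.ofReal_mul ENNReal.toReal_nonneg]
        apply ENNReal.ofReal_le_ofReal
        rw [mul_one_div]
        gcongr
        linarith

lemma slab_int (n : ℕ) (hn : 2 ≤ n) : ∃ C : ℝ, 0 < C ∧ ∀ a : ℝ, 0 < a → ∀ c : ℝ,
    ∫⁻ x in {x : Esp n | ‖x‖ ≤ 1}, ENNReal.ofReal (1 / ((4 * Real.pi ^ 2 * ‖x‖ ^ 2 + c) ^ 2 + a ^ 2))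
      ≤ ENNReal.ofReal (C / a) := by
  obtain ⟨k, hk, h⟩ := lint_radial n (by omega)
  refine ⟨k.toReal + 1, by positivity, fun a ha c => ?_⟩
  let f : ℝ → ENNReal := fun r => if r ≤ 1 then ENNReal.ofReal (1 / ((4 * Real.pi ^ 2 * r ^ 2 + c) ^ 2 + a ^ 2)) else 0
  have hf : Measurable f := Measurable.ite measurableSet_Iic (by fun_prop) measurable_const
  have hms : MeasurableSet {x : Esp n | ‖x‖ ≤ 1} := measurableSet_le (by fun_prop) (by fun_prop)
  calc _ ≤ ∫⁻ x : Esp n, f ‖x‖ := by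
        rw [← lintegral_indicator hms]
        apply lintegral_mono
        intro x
        by_cases hx : x ∈ {x : Esp n | ‖x‖ ≤ 1}
        · simp only [Set.indicator_of_mem hx, f]
          rw [if_pos (show ‖x‖ ≤ 1 from hx)]
        · rw [Set.indicator_of_notMem hx]; exact zero_le
    _ = k * ∫⁻ y in Set.Ioi (0:ℝ), ENNReal.ofReal (y ^ (n - 1)) * f y := h f hf
    _ ≤ k * ∫⁻ y in Set.Ioi (0:ℝ), ENNReal.ofReal (y / ((4 * Real.pi ^ 2 * y ^ 2 + c) ^ 2 + a ^ 2)) := by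
        gcongr k * ?_
        apply setLIntegral_mono (by fun_prop)
        intro y hy
        have hy : (0:ℝ) < y := hy
        simp only [f]
        split_ifs with h1
        · rw [← ENNReal.ofReal_mul (by positivity)]
          apply ENNReal.ofReal_le_ofReal
          have e1 : y ^ (n - 1) ≤ y ^ 1 := pow_le_pow_of_le_one hy.le h1 (by omega)
          rw [mul_one_div]
          rw [pow_one] at e1
          gcongr
        · simp
    _ ≤ k * ENNReal.ofReal (1 / a) := by
        gcongr k * ?_
        exact cauchy_int_sq _ _ ha
    _ = ENNReal.ofReal k.toReal * ENNReal.ofReal (1 / a) := by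
        rw [ENNReal.ofReal_toReal hk]
    _ ≤ _ := by
        rw [← ENNReal.ofReal_mul ENNReal.toReal_nonneg]
        apply ENNReal.ofReal_le_ofReal
        rw [mul_one_div]
        gcongr
        linarith

lemma lint_split (n : ℕ) (G : ℝ → ℝ → ENNReal) (hG : Measurable (Function.uncurry G)) :
    ∫⁻ y : Esp (n + 1), G (y 0) (‖y‖ ^ 2) = ∫⁻ t : ℝ, ∫⁻ z : Esp n, G t (t ^ 2 + ‖z‖ ^ 2) := by
  have m1 : Measurable fun p : ℝ × ℝ => G p.1 p.2 := hG
  have m2 : Measurable fun y : Esp (n + 1) => G (y 0) (‖y‖ ^ 2) :=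
    m1.comp (by fun_prop : Measurable fun y : Esp (n + 1) => ((y 0, ‖y‖ ^ 2) : ℝ × ℝ))
  rw [← (PiLp.volume_preserving_toLp (Fin (n + 1))).lintegral_comp m2]
  rw [← ((volume_preserving_piFinSuccAbove (fun _ : Fin (n + 1) => ℝ) 0).symm).lintegral_comp
    (by fun_prop)]
  rw [Measure.volume_eq_prod, lintegral_prod _ (by fun_prop)]
  apply lintegral_congr
  intro t
  have m3 : Measurable fun z : Esp n => G t (t ^ 2 + ‖z‖ ^ 2) :=
    m1.comp (by fun_prop : Measurable fun z : Esp n => ((t, t ^ 2 + ‖z‖ ^ 2) : ℝ × ℝ))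
  rw [← (PiLp.volume_preserving_toLp (Fin n)).lintegral_comp m3]
  apply lintegral_congr
  intro z
  simp [EuclideanSpace.norm_sq_eq, Fin.sum_univ_succ, MeasurableEquiv.piFinSuccAbove]

lemma lint_rot (n : ℕ) (e : Esp (n + 1)) (he : ‖e‖ = 1) (G : ℝ → ℝ → ENNReal)
    (hG : Measurable (Function.uncurry G)) :
    ∫⁻ y : Esp (n + 1), G (inner ℝ e y) (‖y‖ ^ 2) = ∫⁻ t : ℝ, ∫⁻ z : Esp n, G t (t ^ 2 + ‖z‖ ^ 2) := by
  rw [← lint_split n G hG]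
  have m1 : Measurable fun p : ℝ × ℝ => G p.1 p.2 := hG
  have m2 : Measurable fun y : Esp (n + 1) => G (y 0) (‖y‖ ^ 2) :=
    m1.comp (by fun_prop : Measurable fun y : Esp (n + 1) => ((y 0, ‖y‖ ^ 2) : ℝ × ℝ))
  have ho : Orthonormal ℝ (({0} : Set (Fin (n + 1))).domRestrict (fun _ => e)) := by
    constructor
    · intro i; exact he
    · intro i j hij
      exact absurd (Subsingleton.elim i j) hij
  obtain ⟨b, hb⟩ := ho.exists_orthonormalBasis_extension_of_card_eq (by simp)
  have hb0 : b 0 = e := hb 0 (by simp)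
  rw [← b.measurePreserving_repr.lintegral_comp m2]
  apply lintegral_congr
  intro y
  rw [b.repr_apply_apply, hb0, LinearIsometryEquiv.norm_map]

lemma kernel_pt (A B a : ℝ) (ha : 0 < a) :
    1 / ((A ^ 2 + a ^ 2) * (B ^ 2 + a ^ 2)) ≤
      1 / (((B - A) / 2) ^ 2 + a ^ 2) * (1 / (A ^ 2 + a ^ 2) + 1 / (B ^ 2 + a ^ 2)) := by
  have hA : 0 < A ^ 2 + a ^ 2 := by positivity
  have hB : 0 < B ^ 2 + a ^ 2 := by positivity
  have hT : 0 < ((B - A) / 2) ^ 2 + a ^ 2 := by positivity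
  have e : 1 / (((B - A) / 2) ^ 2 + a ^ 2) * (1 / (A ^ 2 + a ^ 2) + 1 / (B ^ 2 + a ^ 2))
      = (A ^ 2 + a ^ 2 + (B ^ 2 + a ^ 2)) / (((B - A) / 2) ^ 2 + a ^ 2) *
        (1 / ((A ^ 2 + a ^ 2) * (B ^ 2 + a ^ 2))) := by
    field_simp
    ring
  rw [e]
  apply le_mul_of_one_le_left (by positivity)
  rw [one_le_div hT]
  nlinarith [sq_nonneg (A + B), sq_nonneg A, sq_nonneg B, sq_nonneg a]

lemma K_int (n : ℕ) (hn : 2 ≤ n) (ρ₀ : ℝ) (hρ : 0 < ρ₀) : ∃ C : ℝ, 0 < C ∧ ∀ a : ℝ, 0 < a →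
    ∀ ξ : Esp (n + 1), ρ₀ ≤ ‖ξ‖ →
    ∫⁻ η in Shell (n + 1), ENNReal.ofReal (1 / ((wt η ^ 2 + a ^ 2) * (wt (ξ - η) ^ 2 + a ^ 2)))
      ≤ ENNReal.ofReal (C / a ^ 2) := by
  obtain ⟨C, hC, hs⟩ := slab_int n hn
  refine ⟨2 * C / ρ₀, by positivity, fun a ha ξ hξ => ?_⟩
  set ρ := ‖ξ‖ with hρd
  have hρp : 0 < ρ := lt_of_lt_of_le hρ hξ
  let e : Esp (n + 1) := ρ⁻¹ • ξ
  have he : ‖e‖ = 1 := by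
    simp [e, norm_smul, ← hρd, abs_of_pos hρp]
    field_simp
  let k : ℝ → ℝ := fun t => 1 / (((-(4 * Real.pi ^ 2 * ρ)) * t + 2 * Real.pi ^ 2 * ρ ^ 2) ^ 2 + a ^ 2)
  have hk0 : ∀ t, 0 ≤ k t := fun t => by positivity
  let G : ℝ → ℝ → ENNReal := fun t s => if s ≤ 1 then ENNReal.ofReal (k t) *
    (ENNReal.ofReal (1 / ((4 * Real.pi ^ 2 * s - 1) ^ 2 + a ^ 2))
      + ENNReal.ofReal (1 / ((4 * Real.pi ^ 2 * (ρ ^ 2 - 2 * ρ * t + s) - 1) ^ 2 + a ^ 2))) else 0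
  have hkm : Measurable k := by fun_prop
  have hG : Measurable (Function.uncurry G) := by
    apply Measurable.ite (measurableSet_le (by fun_prop) (by fun_prop)) (by fun_prop) measurable_const
  calc _ ≤ ∫⁻ y : Esp (n + 1), G (inner ℝ e y) (‖y‖ ^ 2) := by
        rw [← lintegral_indicator (shell_meas _)]
        apply lintegral_mono
        intro y
        by_cases hy : y ∈ Shell (n + 1)
        · have h1 : ‖y‖ ^ 2 ≤ 1 := by
            have := (shell_norm hy).1
            nlinarith [norm_nonneg y]
          simp only [Set.indicator_of_mem hy, G, if_pos h1]
          rw [← ENNReal.ofReal_add (by positivity) (by positivity), ← ENNReal.ofReal_mul (hk0 _)]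
          apply ENNReal.ofReal_le_ofReal
          refine (kernel_pt _ _ _ ha).trans (le_of_eq ?_)
          have hi : inner ℝ ξ y = ρ * inner ℝ e y := by
            simp only [e, real_inner_smul_left]
            field_simp
          have hw : wt (ξ - y) = 4 * Real.pi ^ 2 * (ρ ^ 2 - 2 * ρ * inner ℝ e y + ‖y‖ ^ 2) - 1 := by
            unfold wt
            rw [norm_sub_sq_real, hi]
            ring
          rw [hw]
          simp only [k, wt]
          ring
        · rw [Set.indicator_of_notMem hy]; exact zero_le
    _ = ∫⁻ t : ℝ, ∫⁻ z : Esp n, G t (t ^ 2 + ‖z‖ ^ 2) := lint_rot n e he G hG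
    _ ≤ ∫⁻ t : ℝ, ENNReal.ofReal (k t) * ENNReal.ofReal (2 * C / a) := by
        apply lintegral_mono
        intro t
        have hms : MeasurableSet {x : Esp n | ‖x‖ ≤ 1} := measurableSet_le (by fun_prop) (by fun_prop)
        let f1 : Esp n → ENNReal := fun z =>
          ENNReal.ofReal (1 / ((4 * Real.pi ^ 2 * ‖z‖ ^ 2 + (4 * Real.pi ^ 2 * t ^ 2 - 1)) ^ 2 + a ^ 2))
        let f2 : Esp n → ENNReal := fun z =>
          ENNReal.ofReal (1 / ((4 * Real.pi ^ 2 * ‖z‖ ^ 2 +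
            (4 * Real.pi ^ 2 * (ρ ^ 2 - 2 * ρ * t + t ^ 2) - 1)) ^ 2 + a ^ 2))
        calc _ ≤ ∫⁻ z in {x : Esp n | ‖x‖ ≤ 1}, ENNReal.ofReal (k t) * (f1 z + f2 z) := by
              rw [← lintegral_indicator hms]
              apply lintegral_mono
              intro z
              simp only [G]
              split_ifs with h
              · have hz : z ∈ {x : Esp n | ‖x‖ ≤ 1} := by
                  have : ‖z‖ ^ 2 ≤ 1 := by nlinarith [sq_nonneg t]
                  show ‖z‖ ≤ 1
                  nlinarith [norm_nonneg z]
                rw [Set.indicator_of_mem hz]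
                simp only [f1, f2]
                apply le_of_eq
                congr 6 <;> ring
              · exact zero_le
          _ = ENNReal.ofReal (k t) * ((∫⁻ z in {x : Esp n | ‖x‖ ≤ 1}, f1 z)
                + ∫⁻ z in {x : Esp n | ‖x‖ ≤ 1}, f2 z) := by
              rw [lintegral_const_mul _ (by fun_prop), lintegral_add_left (by fun_prop)]
          _ ≤ ENNReal.ofReal (k t) * (ENNReal.ofReal (C / a) + ENNReal.ofReal (C / a)) := by
              gcongr
              · exact hs a ha _
              · exact hs a ha _
          _ = _ := by
              rw [← ENNReal.ofReal_add (by positivity) (by positivity)]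
              congr 2
              ring
    _ = ENNReal.ofReal (Real.pi / (|-(4 * Real.pi ^ 2 * ρ)| * a)) * ENNReal.ofReal (2 * C / a) := by
        have hp := Real.pi_pos
        rw [lintegral_mul_const _ (by fun_prop), cauchy_int_affine _ _ _ (by simp; positivity) ha]
    _ ≤ _ := by
        have hp := Real.pi_pos
        rw [← ENNReal.ofReal_mul (by positivity)]
        apply ENNReal.ofReal_le_ofReal
        rw [abs_neg, abs_of_pos (by positivity)]
        have h1 : Real.pi / (4 * Real.pi ^ 2 * ρ * a) ≤ 1 / (ρ₀ * a) := by
          rw [div_le_div_iff₀ (by positivity) (by positivity)]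
          have h3 : ρ₀ * a ≤ ρ * a := by gcongr
          have h4 : Real.pi ≤ 4 * Real.pi ^ 2 := by nlinarith [Real.pi_gt_three]
          nlinarith [mul_le_mul h4 h3 (by positivity) (by positivity)]
        calc _ ≤ 1 / (ρ₀ * a) * (2 * C / a) := by gcongr
          _ = _ := by field_simp

/-! ### Part 3: Fourier transform of `H²` functions -/

open FourierTransform SchwartzMap

lemma memLp_schwartz {N : ℕ} (ψ : 𝓢(Esp N, ℂ)) : MemLp (ψ : Esp N → ℂ) 2 volume := ψ.memLp 2 volume

lemma pderivC_schwartz {N : ℕ} (i : Fin N) (ψ : 𝓢(Esp N, ℂ)) :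
    pderivC i ψ = (LineDeriv.lineDerivOp (EuclideanSpace.single i (1:ℝ)) ψ : 𝓢(Esp N, ℂ)) := by
  ext x
  rw [lineDerivOp_apply_eq_fderiv]
  rfl

lemma integrable_mul_L2 {N : ℕ} {f g : Esp N → ℂ} (hf : MemLp f 2 volume) (hg : MemLp g 2 volume) :
    Integrable (fun x => f x * g x) := hf.integrable_mul hg

lemma weak_ext {N : ℕ} (a : Fin N → Esp N → ℂ) (b : Esp N → ℂ) (ha : ∀ i, MemLp (a i) 2 volume)
    (hb : MemLp b 2 volume)
    (h : ∀ φ : Esp N → ℂ, TestFun φ → ∑ i, ∫ x, a i x * pderivC i φ x = - ∫ x, b x * φ x)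
    (ψ : 𝓢(Esp N, ℂ)) : ∑ i, ∫ x, a i x * pderivC i ψ x = - ∫ x, b x * ψ x := by
  let χ : ContDiffBump (0 : Esp N) := ⟨1, 2, by norm_num, by norm_num⟩
  have hχs : ContDiff ℝ (⊤ : ℕ∞) χ := χ.contDiff
  obtain ⟨K, hK⟩ := (hχs.of_le (by exact_mod_cast le_top : (1 : WithTop ℕ∞) ≤ _)).lipschitzWith_of_hasCompactSupport
    χ.hasCompactSupport (by norm_num)
  let c : ℕ → ℝ := fun n => ((n : ℝ) + 1)⁻¹
  have hc0 : ∀ n, 0 < c n := fun n => by positivity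
  have hc1 : ∀ n, c n ≤ 1 := fun n => inv_le_one_of_one_le₀ (by linarith [(Nat.cast_nonneg n : (0:ℝ) ≤ n)])
  have hclim : Tendsto c atTop (𝓝 0) := by
    have := tendsto_one_div_add_atTop_nhds_zero_nat (𝕜 := ℝ)
    simpa [c] using this
  let X : ℕ → Esp N → ℝ := fun n x => χ (c n • x)
  have hXs : ∀ n, ContDiff ℝ (⊤ : ℕ∞) (X n) := fun n => hχs.comp (contDiff_const_smul (c n))
  have hX1 : ∀ n x, |X n x| ≤ 1 := fun n x => abs_le.2 ⟨by linarith [χ.nonneg' (c n • x)], χ.le_one⟩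
  have hXlim : ∀ x, Tendsto (fun n => X n x) atTop (𝓝 1) := by
    intro x
    have h1 : Tendsto (fun n => c n • x) atTop (𝓝 ((0:ℝ) • x)) := hclim.smul_const x
    rw [zero_smul] at h1
    have h2 := (χ.continuous.tendsto 0).comp h1
    have h3 : χ (0 : Esp N) = 1 := χ.one_of_mem_closedBall (by simp [χ])
    rw [h3] at h2
    exact h2
  have hXd : ∀ n x, ‖fderiv ℝ (X n) x‖ ≤ c n * K := by
    intro n x
    have hl : LipschitzWith (K * ‖c n‖₊) (X n) := hK.comp (lipschitzWith_smul (c n))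
    have := norm_fderiv_le_of_lipschitz ℝ hl (x₀ := x)
    refine this.trans (le_of_eq ?_)
    simp [abs_of_pos (hc0 n), mul_comm]
  let φ : ℕ → Esp N → ℂ := fun n x => (X n x : ℝ) • ψ x
  have hφ : ∀ n, TestFun (φ n) := by
    intro n
    refine ⟨(hXs n).smul (ψ.smooth _), ?_⟩
    have hcs : HasCompactSupport (X n) := χ.hasCompactSupport.comp_smul (hc0 n).ne'
    exact hcs.smul_right
  have hpd : ∀ n i x, pderivC i (φ n) x = (X n x : ℝ) • pderivC i ψ x
      + (fderiv ℝ (X n) x (EuclideanSpace.single i 1)) • ψ x := by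
    intro n i x
    unfold pderivC
    have := fderiv_fun_smul (𝕜 := ℝ) ((hXs n).differentiable (by simp) x) (ψ.differentiableAt (x := x))
    simp only [φ]
    rw [this]
    simp
  have hdb : ∀ n i x, |fderiv ℝ (X n) x (EuclideanSpace.single i 1)| ≤ c n * K := by
    intro n i x
    calc _ ≤ ‖fderiv ℝ (X n) x‖ * ‖EuclideanSpace.single i (1:ℝ)‖ := (fderiv ℝ (X n) x).le_opNorm _
      _ ≤ _ := by simpa using hXd n x
  have T1 : ∀ i, Tendsto (fun n => ∫ x, a i x * pderivC i (φ n) x) atTop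
      (𝓝 (∫ x, a i x * pderivC i ψ x)) := by
    intro i
    have hdψ : MemLp (pderivC i ψ) 2 volume := by rw [pderivC_schwartz]; exact memLp_schwartz _
    have hsm : ∀ n, AEStronglyMeasurable (fun x => a i x * pderivC i (φ n) x) volume := by
      intro n
      refine (ha i).aestronglyMeasurable.mul ?_
      have : Continuous (pderivC i (φ n)) := by
        unfold pderivC
        exact (((hφ n).1.continuous_fderiv (by simp)).clm_apply continuous_const)
      exact this.aestronglyMeasurable
    refine tendsto_integral_of_dominated_convergence
      (fun x => ‖a i x * pderivC i ψ x‖ + K * ‖a i x * ψ x‖) hsm ?_ ?_ ?_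
    · exact (integrable_mul_L2 (ha i) hdψ).norm.add ((integrable_mul_L2 (ha i) (memLp_schwartz ψ)).norm.const_mul _)
    · intro n
      refine Eventually.of_forall fun x => ?_
      rw [hpd, mul_add]
      refine (norm_add_le _ _).trans ?_
      have h1 := hX1 n x
      have h2 : |fderiv ℝ (X n) x (EuclideanSpace.single i 1)| ≤ K :=
        (hdb n i x).trans (mul_le_of_le_one_left K.2 (hc1 n))
      simp only [norm_mul, norm_smul, Real.norm_eq_abs]
      apply add_le_add
      · apply mul_le_mul_of_nonneg_left _ (norm_nonneg _)
        exact mul_le_of_le_one_left (norm_nonneg _) h1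
      · calc _ ≤ ‖a i x‖ * (K * ‖ψ x‖) := by gcongr
          _ = _ := by ring
    · refine Eventually.of_forall fun x => ?_
      have h1 : Tendsto (fun n => a i x * ((X n x : ℝ) • pderivC i ψ x
          + (fderiv ℝ (X n) x (EuclideanSpace.single i 1)) • ψ x)) atTop
          (𝓝 (a i x * ((1:ℝ) • pderivC i ψ x + (0:ℝ) • ψ x))) := by
        apply Tendsto.const_mul
        apply Tendsto.add
        · exact (hXlim x).smul_const _
        · apply Tendsto.smul_const
          apply squeeze_zero_norm (fun n => hdb n i x)
          simpa using hclim.mul_const (K : ℝ)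
      simp only [one_smul, zero_smul, add_zero] at h1
      simpa only [hpd] using h1
  have T2 : Tendsto (fun n => ∫ x, b x * φ n x) atTop (𝓝 (∫ x, b x * ψ x)) := by
    refine tendsto_integral_of_dominated_convergence (fun x => ‖b x * ψ x‖) ?_ ?_ ?_ ?_
    · intro n
      exact hb.aestronglyMeasurable.mul (hφ n).1.continuous.aestronglyMeasurable
    · exact (integrable_mul_L2 hb (memLp_schwartz ψ)).norm
    · intro n
      refine Eventually.of_forall fun x => ?_
      simp only [φ, norm_mul, norm_smul, Real.norm_eq_abs]
      apply mul_le_mul_of_nonneg_left _ (norm_nonneg _)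
      exact mul_le_of_le_one_left (norm_nonneg _) (hX1 n x)
    · refine Eventually.of_forall fun x => ?_
      apply Tendsto.const_mul
      have := (hXlim x).smul_const (ψ x)
      simp only [one_smul] at this
      exact this
  have T3 : Tendsto (fun n => ∑ i, ∫ x, a i x * pderivC i (φ n) x) atTop
      (𝓝 (∑ i, ∫ x, a i x * pderivC i ψ x)) := tendsto_finsetSum _ fun i _ => T1 i
  have T4 : Tendsto (fun n => ∑ i, ∫ x, a i x * pderivC i (φ n) x) atTop
      (𝓝 (- ∫ x, b x * ψ x)) := by
    simp only [h _ (hφ _)]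
    exact T2.neg
  exact tendsto_nhds_unique T3 T4

lemma H2.weak_grad {N : ℕ} (U : H2 N) (i : Fin N) (ψ : 𝓢(Esp N, ℂ)) :
    ∫ x, U.u x * pderivC i ψ x = - ∫ x, U.grad i x * ψ x := by
  have := weak_ext (fun j => if j = i then U.u else 0) (U.grad i)
    (fun j => by by_cases hj : j = i <;> simp [hj, U.u_mem]) (U.grad_mem i) (fun φ hφ => by
      rw [Finset.sum_eq_single i]
      · simpa using U.grad_spec i φ hφ
      · intro j _ hj; simp [hj]
      · simp) ψ
  rw [Finset.sum_eq_single i] at this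
  · simpa using this
  · intro j _ hj; simp [hj]
  · simp

lemma testFun_pderivC {N : ℕ} (i : Fin N) {φ : Esp N → ℂ} (h : TestFun φ) : TestFun (pderivC i φ) := by
  constructor
  · unfold pderivC
    have : ContDiff ℝ (⊤ : ℕ∞) (fderiv ℝ φ) := h.1.fderiv_right (by simp)
    exact this.clm_apply contDiff_const
  · exact (h.2.fderiv_apply (𝕜 := ℝ) _)

lemma H2.weak_lap {N : ℕ} (U : H2 N) (ψ : 𝓢(Esp N, ℂ)) :
    ∑ i, ∫ x, U.grad i x * pderivC i ψ x = - ∫ x, U.lapl x * ψ x := by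
  refine weak_ext U.grad U.lapl U.grad_mem U.lapl_mem (fun φ hφ => ?_) ψ
  rw [← U.lapl_spec φ hφ]
  have h1 : ∀ i, ∫ x, U.grad i x * pderivC i φ x = - ∫ x, U.u x * pderivC i (pderivC i φ) x := by
    intro i
    rw [U.grad_spec i _ (testFun_pderivC i hφ), neg_neg]
  simp only [h1, Finset.sum_neg_distrib, lapC, Finset.mul_sum]
  rw [integral_finsetSum]
  intro i _
  have ht := testFun_pderivC i (testFun_pderivC i hφ)
  exact integrable_mul_L2 U.u_mem (ht.1.continuous.memLp_of_hasCompactSupport ht.2)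

/-! ### Part 4: a relational form of the `L²` Fourier transform -/

open FourierTransform SchwartzMap

/-- `u` is the Fourier transform of `g`, both in `L²`, in the sense of tempered distributions. -/
structure FT {N : ℕ} (g u : Esp N → ℂ) : Prop where
  mg : MemLp g 2 volume
  mu : MemLp u 2 volume
  pair : ∀ ψ : 𝓢(Esp N, ℂ), ∫ x, u x * ψ x = ∫ x, g x * (𝓕 ψ : 𝓢(Esp N, ℂ)) x

lemma schw_unique {N : ℕ} {f f' : Esp N → ℂ} (hf : LocallyIntegrable f) (hf' : LocallyIntegrable f')
    (h : ∀ ψ : 𝓢(Esp N, ℂ), ∫ x, f x * ψ x = ∫ x, f' x * ψ x) : f =ᵐ[volume] f' := by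
  refine ae_eq_of_integral_contDiff_smul_eq hf hf' fun φ h1 h2 => ?_
  have hc : HasCompactSupport (fun x => (φ x : ℂ)) := by
    exact h2.comp_left (g := fun r : ℝ => (r : ℂ)) (by simp)
  have hs : ContDiff ℝ (⊤ : ℕ∞) (fun x => (φ x : ℂ)) := Complex.ofRealCLM.contDiff.comp h1
  have := h (hc.toSchwartzMap hs)
  have e : ∀ x, (hc.toSchwartzMap hs) x = (φ x : ℂ) := fun x => rfl
  simp only [e] at this
  simpa only [Complex.real_smul, mul_comm] using this

lemma locInt_L2 {N : ℕ} {f : Esp N → ℂ} (hf : MemLp f 2 volume) : LocallyIntegrable f :=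
  hf.locallyIntegrable (by norm_num)

lemma FT_of_Lp {N : ℕ} (g : Lp (α := Esp N) ℂ 2) : FT g (𝓕 g : Lp (α := Esp N) ℂ 2) := by
  refine ⟨Lp.memLp _, Lp.memLp _, fun ψ => ?_⟩
  have h := congrArg (fun T => T ψ) (Lp.fourier_toTemperedDistribution_eq g)
  simp only [TemperedDistribution.fourier_apply, Lp.toTemperedDistribution_apply] at h
  simpa only [smul_eq_mul, mul_comm] using h.symm

lemma FT.congr {N : ℕ} {g u g' u' : Esp N → ℂ} (h : FT g u) (hg : g =ᵐ[volume] g')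
    (hu : u =ᵐ[volume] u') : FT g' u' := by
  refine ⟨h.mg.ae_eq hg, h.mu.ae_eq hu, fun ψ => ?_⟩
  have := h.pair ψ
  have e1 : ∫ x, u x * ψ x = ∫ x, u' x * ψ x := integral_congr_ae (hu.mono fun x hx => by simp only [hx])
  have e2 : ∫ x, g x * (𝓕 ψ : 𝓢(Esp N, ℂ)) x = ∫ x, g' x * (𝓕 ψ : 𝓢(Esp N, ℂ)) x :=
    integral_congr_ae (hg.mono fun x hx => by simp only [hx])
  rw [← e1, ← e2, this]

lemma FT.uniq_u {N : ℕ} {g u u' : Esp N → ℂ} (h : FT g u) (h' : FT g u') : u =ᵐ[volume] u' :=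
  schw_unique (locInt_L2 h.mu) (locInt_L2 h'.mu) fun ψ => by rw [h.pair, h'.pair]

lemma FT.uniq_g {N : ℕ} {g u g' : Esp N → ℂ} (h : FT g u) (hl : LocallyIntegrable g')
    (h' : ∀ ψ : 𝓢(Esp N, ℂ), ∫ x, u x * ψ x = ∫ x, g' x * (𝓕 ψ : 𝓢(Esp N, ℂ)) x) : g =ᵐ[volume] g' :=
  schw_unique (locInt_L2 h.mg) hl fun ψ => by
    have := h'  (𝓕⁻ ψ)
    rw [h.pair] at this
    simpa using this

lemma FT_exists {N : ℕ} {g : Esp N → ℂ} (hg : MemLp g 2 volume) : ∃ u, FT g u :=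
  ⟨_, (FT_of_Lp (hg.toLp g)).congr hg.coeFn_toLp (ae_eq_refl _)⟩

lemma FT_exists_inv {N : ℕ} {u : Esp N → ℂ} (hu : MemLp u 2 volume) : ∃ g, FT g u := by
  have h := FT_of_Lp (𝓕⁻ (hu.toLp u))
  rw [FourierTransform.fourier_fourierInv_eq] at h
  exact ⟨_, h.congr (ae_eq_refl _) hu.coeFn_toLp⟩

lemma FT.eLp {N : ℕ} {g u : Esp N → ℂ} (h : FT g u) : eLpNorm u 2 volume = eLpNorm g 2 volume := by
  have h1 := (FT_of_Lp (h.mg.toLp g)).congr h.mg.coeFn_toLp (ae_eq_refl _)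
  have h2 := h.uniq_u h1
  rw [eLpNorm_congr_ae h2]
  have h3 := Lp.norm_fourier_eq (h.mg.toLp g)
  rw [Lp.norm_def, Lp.norm_def] at h3
  rw [(ENNReal.toReal_eq_toReal_iff' (Lp.eLpNorm_ne_top _) (Lp.eLpNorm_ne_top _)).1 h3]
  exact eLpNorm_congr_ae h.mg.coeFn_toLp

lemma eLp_sq {N : ℕ} (f : Esp N → ℂ) : ∫⁻ x, ‖f x‖ₑ ^ 2 = eLpNorm f 2 volume ^ 2 := by
  have := eLpNorm_nnreal_pow_eq_lintegral (f := f) (μ := (volume : Measure (Esp N))) (p := 2) (by norm_num)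
  simpa using this.symm

lemma FT.lint {N : ℕ} {g u : Esp N → ℂ} (h : FT g u) : ∫⁻ x, ‖u x‖ₑ ^ 2 = ∫⁻ x, ‖g x‖ₑ ^ 2 := by
  rw [eLp_sq, eLp_sq, h.eLp]

lemma FT.int {N : ℕ} {g u : Esp N → ℂ} (h : FT g u) : ∫ x, ‖u x‖ ^ 2 = ∫ x, ‖g x‖ ^ 2 := by
  have m1 : AEStronglyMeasurable (fun x => ‖u x‖ ^ 2) volume := h.mu.aestronglyMeasurable.norm.pow 2
  have m2 : AEStronglyMeasurable (fun x => ‖g x‖ ^ 2) volume := h.mg.aestronglyMeasurable.norm.pow 2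
  rw [integral_eq_lintegral_of_nonneg_ae (by filter_upwards with x; positivity) m1,
    integral_eq_lintegral_of_nonneg_ae (by filter_upwards with x; positivity) m2]
  congr 1
  simpa [ENNReal.ofReal_pow] using h.lint

lemma FT.add {N : ℕ} {g u g' u' : Esp N → ℂ} (h : FT g u) (h' : FT g' u') : FT (g + g') (u + u') := by
  refine ⟨h.mg.add h'.mg, h.mu.add h'.mu, fun ψ => ?_⟩
  simp only [Pi.add_apply, add_mul]
  rw [integral_add (integrable_mul_L2 h.mu (memLp_schwartz ψ)) (integrable_mul_L2 h'.mu (memLp_schwartz ψ)),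
    integral_add (integrable_mul_L2 h.mg (memLp_schwartz _)) (integrable_mul_L2 h'.mg (memLp_schwartz _)),
    h.pair, h'.pair]

lemma FT_sum {N : ℕ} {ι : Type*} (s : Finset ι) {g u : ι → Esp N → ℂ} (h : ∀ i, FT (g i) (u i)) :
    FT (∑ i ∈ s, g i) (∑ i ∈ s, u i) := by
  classical
  induction s using Finset.induction_on with
  | empty => simp only [Finset.sum_empty]; exact ⟨MemLp.zero, MemLp.zero, by simp⟩
  | insert a s ha ih => rw [Finset.sum_insert ha, Finset.sum_insert ha]; exact (h a).add ih

lemma FT.L1 {N : ℕ} {g u : Esp N → ℂ} (h : FT g u) (hi : Integrable g) : u =ᵐ[volume] (𝓕 g) := by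
  refine schw_unique (locInt_L2 h.mu) ?_ fun ψ => ?_
  · exact (VectorFourier.fourierIntegral_continuous Real.continuous_fourierChar
      (by exact continuous_inner) hi).locallyIntegrable
  · rw [h.pair]
    have := VectorFourier.integral_fourierIntegral_smul_eq_flip (e := Real.fourierChar) (μ := (volume : Measure (Esp N)))
      (ν := (volume : Measure (Esp N))) (L := innerₗ (Esp N)) (f := g) (g := ψ) Real.continuous_fourierChar
      (by exact continuous_inner) hi ψ.integrable
    rw [SchwartzMap.fourier_coe]
    simp only [smul_eq_mul, flip_innerₗ] at this
    exact this.symm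

lemma FT.bound {N : ℕ} {g u : Esp N → ℂ} (h : FT g u) (hi : Integrable g) :
    ∀ᵐ x, ‖u x‖ ≤ ∫ y, ‖g y‖ := by
  filter_upwards [h.L1 hi] with x hx
  rw [hx]
  exact VectorFourier.norm_fourierIntegral_le_integral_norm _ _ _ _ _

/-- Fourier side of an `H²` function. -/
lemma H2.fourier {N : ℕ} (U : H2 N) : ∃ g : Esp N → ℂ, FT g U.u ∧
    Integrable (fun ξ => (4 * Real.pi ^ 2 * ‖ξ‖ ^ 2) * ‖g ξ‖ ^ 2) ∧
    Integrable (fun ξ => (4 * Real.pi ^ 2 * ‖ξ‖ ^ 2) ^ 2 * ‖g ξ‖ ^ 2) ∧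
    U.gradSq = ∫ ξ, (4 * Real.pi ^ 2 * ‖ξ‖ ^ 2) * ‖g ξ‖ ^ 2 ∧
    U.lapSq = ∫ ξ, (4 * Real.pi ^ 2 * ‖ξ‖ ^ 2) ^ 2 * ‖g ξ‖ ^ 2 := by
  obtain ⟨g, hg⟩ := FT_exists_inv U.u_mem
  have h1 : ∀ i, ∃ gi, FT gi (U.grad i) := fun i => FT_exists_inv (U.grad_mem i)
  choose gi hgi using h1
  obtain ⟨gl, hgl⟩ := FT_exists_inv U.lapl_mem
  have hder : ∀ (i : Fin N) (ψ : 𝓢(Esp N, ℂ)) (ξ : Esp N),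
      (𝓕 (LineDeriv.lineDerivOp (EuclideanSpace.single i (1:ℝ)) ψ : 𝓢(Esp N, ℂ)) : 𝓢(Esp N, ℂ)) ξ
        = (2 * Real.pi * Complex.I) * ((ξ i : ℝ) * (𝓕 ψ : 𝓢(Esp N, ℂ)) ξ) := by
    intro i ψ ξ
    rw [SchwartzMap.fourier_lineDerivOp_eq]
    simp only [smul_apply, smul_eq_mul]
    rw [smulLeftCLM_apply_apply (by fun_prop)]
    simp [EuclideanSpace.inner_single_right]
  have hli : ∀ (c : Esp N → ℂ) (f : Esp N → ℂ), Continuous c → MemLp f 2 volume →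
      LocallyIntegrable (fun ξ => c ξ * f ξ) := by
    intro c f hc hf
    have := (locallyIntegrableOn_univ.2 (locInt_L2 hf)).continuousOn_mul (g := c) (hc.continuousOn) 
      isOpen_univ.isLocallyClosed
    exact locallyIntegrableOn_univ.1 this
  have e1 : ∀ i, gi i =ᵐ[volume] fun ξ => (-(2 * Real.pi * Complex.I) * (ξ i : ℝ)) * g ξ := by
    intro i
    refine (hgi i).uniq_g (hli _ _ (by fun_prop) hg.mg) fun ψ => ?_
    have := U.weak_grad i ψ
    rw [pderivC_schwartz, hg.pair] at this
    rw [← neg_eq_iff_eq_neg] at this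
    rw [← this, ← integral_neg]
    congr 1
    ext ξ
    rw [hder]
    ring
  have e2 : gl =ᵐ[volume] fun ξ => (-(4 * Real.pi ^ 2 * ‖ξ‖ ^ 2 : ℝ)) * g ξ := by
    have : gl =ᵐ[volume] fun ξ => ∑ i, (-(2 * Real.pi * Complex.I) * (ξ i : ℝ)) * gi i ξ := by
      refine hgl.uniq_g ?_ fun ψ => ?_
      · have : (fun ξ : Esp N => ∑ i, (-(2 * Real.pi * Complex.I) * (ξ i : ℝ)) * gi i ξ)
            = ∑ i, fun ξ : Esp N => (-(2 * Real.pi * Complex.I) * (ξ i : ℝ)) * gi i ξ := by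
          ext; simp
        rw [this]
        exact Finset.sum_induction _ (fun f => LocallyIntegrable f volume) (fun a b ha hb => ha.add hb)
          (locallyIntegrable_zero) fun i _ => hli _ _ (by fun_prop) (hgi i).mg
      · have := U.weak_lap ψ
        rw [← neg_eq_iff_eq_neg] at this
        rw [← this, ← Finset.sum_neg_distrib]
        simp only [Finset.sum_mul]
        rw [integral_finsetSum]
        · refine Finset.sum_congr rfl fun i _ => ?_
          rw [pderivC_schwartz, (hgi i).pair, ← integral_neg]
          congr 1
          ext ξ
          rw [hder]
          ring
        · intro i _
          have := integrable_mul_L2 (hgi i).mg (memLp_schwartz (𝓕 (LineDeriv.lineDerivOp (EuclideanSpace.single i (1:ℝ)) ψ : 𝓢(Esp N, ℂ))))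
          refine this.neg.congr (Eventually.of_forall fun ξ => ?_)
          simp only [Pi.neg_apply, hder]
          ring
    filter_upwards [this, ae_all_iff.2 e1] with ξ h1 h2
    rw [h1]
    simp only [h2, EuclideanSpace.norm_sq_eq, Finset.mul_sum]
    push_cast
    rw [← Finset.sum_neg_distrib, Finset.sum_mul]
    refine Finset.sum_congr rfl fun i _ => ?_
    have h3 : ((|ξ i| : ℝ) : ℂ) ^ 2 = (ξ i : ℂ) ^ 2 := by
      rw [← Complex.ofReal_pow, sq_abs, Complex.ofReal_pow]
    simp only [Real.norm_eq_abs, h3]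
    ring_nf
    simp only [Complex.I_sq]
    ring
  have n1 : ∀ i, (fun ξ => ‖gi i ξ‖ ^ 2) =ᵐ[volume] fun ξ => (4 * Real.pi ^ 2 * (ξ i) ^ 2) * ‖g ξ‖ ^ 2 := by
    intro i
    filter_upwards [e1 i] with ξ h
    rw [h]
    simp only [norm_mul, norm_neg, Complex.norm_I, Complex.norm_real, Real.norm_eq_abs, mul_pow, sq_abs]
    norm_num
  have n2 : (fun ξ => ‖gl ξ‖ ^ 2) =ᵐ[volume] fun ξ => (4 * Real.pi ^ 2 * ‖ξ‖ ^ 2) ^ 2 * ‖g ξ‖ ^ 2 := by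
    filter_upwards [e2] with ξ h
    rw [h]
    simp [mul_pow, abs_of_pos Real.pi_pos]
  have i1 : ∀ i, Integrable (fun ξ : Esp N => (4 * Real.pi ^ 2 * (ξ i) ^ 2) * ‖g ξ‖ ^ 2) := fun i =>
    ((hgi i).mg.integrable_norm_pow (by norm_num)).congr (n1 i)
  have hs : (fun ξ : Esp N => (4 * Real.pi ^ 2 * ‖ξ‖ ^ 2) * ‖g ξ‖ ^ 2)
      = fun ξ => ∑ i, (4 * Real.pi ^ 2 * (ξ i) ^ 2) * ‖g ξ‖ ^ 2 := by
    ext ξ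
    rw [EuclideanSpace.norm_sq_eq, Finset.mul_sum, Finset.sum_mul]
    simp
  refine ⟨g, hg, ?_, ?_, ?_, ?_⟩
  · rw [hs]; exact integrable_finsetSum _ fun i _ => i1 i
  · exact (hgl.mg.integrable_norm_pow (by norm_num)).congr n2
  · rw [hs, integral_finsetSum _ fun i _ => i1 i]
    exact Finset.sum_congr rfl fun i _ => by rw [(hgi i).int, integral_congr_ae (n1 i)]
  · rw [H2.lapSq, hgl.int, integral_congr_ae n2]

/-! ### Part 5: estimates near the unit frequency shell -/

open FourierTransform SchwartzMap

lemma cs_weight {α : Type*} [MeasurableSpace α] (μ : Measure α) {f : α → ENNReal} {w : α → ℝ}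
    (hf : AEMeasurable f μ) (hw : Measurable w) (hpos : ∀ x, 0 < w x) :
    (∫⁻ x, f x ∂μ) ^ 2 ≤ (∫⁻ x, ENNReal.ofReal (1 / w x) ∂μ) * ∫⁻ x, ENNReal.ofReal (w x) * f x ^ 2 ∂μ := by
  have h := ENNReal.lintegral_mul_le_Lp_mul_Lq μ (p := 2) (q := 2) (by constructor <;> norm_num)
    (f := fun x => ENNReal.ofReal (Real.sqrt (1 / w x))) (g := fun x => ENNReal.ofReal (Real.sqrt (w x)) * f x)
    (by fun_prop) (by fun_prop)
  have e1 : ∫⁻ x, f x ∂μ = ∫⁻ x, ((fun x => ENNReal.ofReal (Real.sqrt (1 / w x))) * 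
      fun x => ENNReal.ofReal (Real.sqrt (w x)) * f x) x ∂μ := by
    congr 1
    ext x
    simp only [Pi.mul_apply]
    rw [← mul_assoc, ← ENNReal.ofReal_mul (Real.sqrt_nonneg _), ← Real.sqrt_mul (by have := hpos x; positivity),
      one_div_mul_cancel (hpos x).ne']
    simp
  rw [e1]
  calc _ ≤ ((∫⁻ x, ENNReal.ofReal (Real.sqrt (1 / w x)) ^ (2:ℝ) ∂μ) ^ (1 / (2:ℝ)) *
      (∫⁻ x, (ENNReal.ofReal (Real.sqrt (w x)) * f x) ^ (2:ℝ) ∂μ) ^ (1 / (2:ℝ))) ^ 2 := by gcongr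
    _ = _ := by
      rw [mul_pow, ← ENNReal.rpow_natCast, ← ENNReal.rpow_natCast, ← ENNReal.rpow_mul, ← ENNReal.rpow_mul]
      norm_num
      congr 1
      · congr 1
        ext x
        rw [← ENNReal.ofReal_pow (by positivity), ← Real.sqrt_inv, Real.sq_sqrt (by have := hpos x; positivity)]
      · congr 1
        ext x
        rw [mul_pow, ← ENNReal.ofReal_pow (by positivity), Real.sq_sqrt (by have := hpos x; positivity)]

lemma lint_supp {N : ℕ} {S : Set (Esp N)} (hS : MeasurableSet S) {F : Esp N → ENNReal} (h : ∀ x ∉ S, F x = 0) :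
    ∫⁻ x, F x = ∫⁻ x in S, F x := by
  rw [← lintegral_indicator hS]
  congr 1
  ext x
  by_cases hx : x ∈ S
  · simp [hx]
  · simp [hx, h x hx]

lemma wta_pos {N : ℕ} {a : ℝ} (ha : 0 < a) (x : Esp N) : 0 < wt x ^ 2 + a ^ 2 := by positivity

lemma shell_L1 (N : ℕ) (hN : 1 ≤ N) : ∃ C > 0, ∀ a > 0, ∀ h : Esp N → ℂ, Measurable h →
    (∀ x ∉ Shell N, h x = 0) →
    (∫⁻ x, ‖h x‖ₑ) ^ 2 ≤ ENNReal.ofReal (C / a) * ∫⁻ x, ENNReal.ofReal (wt x ^ 2 + a ^ 2) * ‖h x‖ₑ ^ 2 := by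
  obtain ⟨C, hC, H⟩ := shell_int N hN
  refine ⟨C, hC, fun a ha h hm hs => ?_⟩
  rw [lint_supp (shell_meas N) (F := fun x => ‖h x‖ₑ) (fun x hx => by simp [hs x hx])]
  refine (cs_weight (volume.restrict (Shell N)) (w := fun x => wt x ^ 2 + a ^ 2) (by fun_prop)
    ((wt_cont.pow 2).add continuous_const).measurable (wta_pos ha)).trans ?_
  exact mul_le_mul' (H a ha) (setLIntegral_le_lintegral _ _)

lemma enorm_ofReal_bound {z : ℂ} {B : ℝ} (h : ‖z‖ ≤ B) : ‖z‖ₑ ≤ ENNReal.ofReal B := by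
  rw [← ofReal_norm]; exact ENNReal.ofReal_le_ofReal h

lemma shell_sup (N : ℕ) (hN : 1 ≤ N) : ∃ C > 0, ∀ a > 0, ∀ m > 0, ∀ h u : Esp N → ℂ, Measurable h →
    FT h u → (∀ x ∉ Shell N, h x = 0) →
    ∫⁻ x, ENNReal.ofReal (wt x ^ 2 + a ^ 2) * ‖h x‖ₑ ^ 2 ≤ ENNReal.ofReal (2 * a ^ 2 * m) →
    Integrable h ∧ ∀ᵐ x, ‖u x‖ₑ ≤ ENNReal.ofReal (Real.sqrt (C * a * m)) := by
  obtain ⟨C, hC, H⟩ := shell_L1 N hN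
  refine ⟨2 * C, by positivity, fun a ha m hm0 h u hm hF hs hW => ?_⟩
  have h1 := H a ha h hm hs
  have h2 : (∫⁻ x, ‖h x‖ₑ) ^ 2 ≤ ENNReal.ofReal (2 * C * a * m) := by
    refine h1.trans ((mul_le_mul' le_rfl hW).trans (le_of_eq ?_))
    rw [← ENNReal.ofReal_mul (by positivity)]
    congr 1
    field_simp
  have h3 : ∫⁻ x, ‖h x‖ₑ ≤ ENNReal.ofReal (Real.sqrt (2 * C * a * m)) := by
    rw [← Real.sq_sqrt (by positivity : 0 ≤ 2 * C * a * m), ENNReal.ofReal_pow (by positivity)] at h2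
    exact (ENNReal.pow_le_pow_left_iff (by norm_num)).1 h2
  have hi : Integrable h := ⟨hm.aestronglyMeasurable, h3.trans_lt ENNReal.ofReal_lt_top⟩
  refine ⟨hi, ?_⟩
  filter_upwards [hF.bound hi] with x hx
  refine (enorm_ofReal_bound hx).trans ?_
  rw [ofReal_integral_norm_eq_lintegral_enorm hi]
  exact h3

/-- `L^q` bound by interpolation between `L^∞` and `L^r`. -/
lemma interp_bound {N : ℕ} {u : Esp N → ℂ} {r q b : ℝ} (hq : r ≤ q) (hr : 0 < r)
    (hb : ∀ᵐ x, ‖u x‖ₑ ≤ ENNReal.ofReal b) :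
    ∫⁻ x, ‖u x‖ₑ ^ q ≤ ENNReal.ofReal b ^ (q - r) * ∫⁻ x, ‖u x‖ₑ ^ r := by
  rw [← lintegral_const_mul' _ _ (ENNReal.rpow_ne_top_of_nonneg (by linarith) ENNReal.ofReal_ne_top)]
  refine lintegral_mono_ae ?_
  filter_upwards [hb] with x hx
  calc ‖u x‖ₑ ^ q = ‖u x‖ₑ ^ (q - r) * ‖u x‖ₑ ^ r := by
        rw [← ENNReal.rpow_add_of_nonneg _ _ (by linarith) hr.le]; congr 1; ring
    _ ≤ _ := by gcongr

/-- Frequency orthants. -/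
def Orth {N : ℕ} (s : Fin N → Bool) : Set (Esp N) := {x | ∀ i, (s i = true ↔ 0 ≤ x i)}

lemma orth_meas {N : ℕ} (s : Fin N → Bool) : MeasurableSet (Orth s) := by
  have : Orth s = ⋂ i, {x : Esp N | s i = true ↔ 0 ≤ x i} := by ext; simp [Orth]
  rw [this]
  refine MeasurableSet.iInter fun i => ?_
  have hm : MeasurableSet {x : Esp N | 0 ≤ x i} := measurableSet_le measurable_const (by fun_prop)
  cases h : s i
  · have : {x : Esp N | false = true ↔ 0 ≤ x i} = {x : Esp N | 0 ≤ x i}ᶜ := by ext; simp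
    rw [this]; exact hm.compl
  · have : {x : Esp N | true = true ↔ 0 ≤ x i} = {x : Esp N | 0 ≤ x i} := by ext; simp
    rw [this]; exact hm

lemma orth_norm {N : ℕ} {s : Fin N → Bool} {x y : Esp N} (hx : x ∈ Orth s) (hy : y ∈ Orth s) :
    ‖x‖ ^ 2 ≤ ‖x + y‖ ^ 2 := by
  have h : 0 ≤ inner ℝ x y := by
    rw [PiLp.inner_apply]
    refine Finset.sum_nonneg fun i _ => ?_
    simp only [RCLike.inner_apply, conj_trivial]
    have h1 := hx i
    have h2 := hy i
    by_cases h3 : s i = true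
    · exact mul_nonneg (h2.1 h3) (h1.1 h3)
    · exact mul_nonneg_of_nonpos_of_nonpos (not_le.1 (mt h2.2 h3)).le (not_le.1 (mt h1.2 h3)).le
  rw [norm_add_sq_real]
  nlinarith [sq_nonneg ‖y‖]

lemma orth_L4 (N : ℕ) (hN : 3 ≤ N) : ∃ C > 0, ∀ a > 0, ∀ (s : Fin N → Bool) (h u : Esp N → ℂ), Measurable h →
    FT h u → (∀ x, x ∉ Shell N ∩ Orth s → h x = 0) → Integrable h →
    ∫⁻ x, ENNReal.ofReal (wt x ^ 2 + a ^ 2) * ‖h x‖ₑ ^ 2 < ⊤ →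
    ∫⁻ x, ‖u x‖ₑ ^ 4 ≤ ENNReal.ofReal (C / a ^ 2) *
      (∫⁻ x, ENNReal.ofReal (wt x ^ 2 + a ^ 2) * ‖h x‖ₑ ^ 2) ^ 2 := by
  obtain ⟨n, rfl⟩ : ∃ n, N = n + 1 := ⟨N - 1, by omega⟩
  obtain ⟨C, hC, H⟩ := K_int n (by omega) (1 / (4 * Real.pi)) (by positivity)
  refine ⟨C, hC, fun a ha s h u hm hF hs hi hW => ?_⟩
  set F : Esp (n+1) → ENNReal := fun x => ENNReal.ofReal (wt x ^ 2 + a ^ 2) * ‖h x‖ₑ ^ 2 with hFdef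
  have hwm : Measurable (fun x : Esp (n+1) => wt x ^ 2 + a ^ 2) := ((wt_cont.pow 2).add continuous_const).measurable
  have hFm : Measurable F := hwm.ennreal_ofReal.mul (hm.enorm.pow_const 2)
  set G : Esp (n+1) → ℂ := convolution h h (ContinuousLinearMap.mul ℂ ℂ) volume with hG
  have hGi : Integrable G := hi.integrable_convolution _ hi
  -- pointwise bound
  have pt : ∀ ξ, ‖G ξ‖ₑ ^ 2 ≤ ENNReal.ofReal (C / a ^ 2) * ∫⁻ η, F η * F (ξ - η) := by
    intro ξ
    have b1 : ‖G ξ‖ₑ ≤ ∫⁻ η, ‖h η‖ₑ * ‖h (ξ - η)‖ₑ := by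
      rw [hG, convolution_def]
      refine (enorm_integral_le_lintegral_enorm _).trans (le_of_eq ?_)
      simp [enorm_mul]
    by_cases hξ : 1 / (4 * Real.pi) ≤ ‖ξ‖
    · have hwm2 : Measurable (fun η : Esp (n+1) => (wt η ^ 2 + a ^ 2) * (wt (ξ - η) ^ 2 + a ^ 2)) :=
        hwm.mul (hwm.comp (measurable_const.sub measurable_id))
      have b2 := cs_weight (volume.restrict (Shell (n+1))) (f := fun η => ‖h η‖ₑ * ‖h (ξ - η)‖ₑ)
        (w := fun η => (wt η ^ 2 + a ^ 2) * (wt (ξ - η) ^ 2 + a ^ 2))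
        (hm.enorm.mul (hm.comp (measurable_const.sub measurable_id)).enorm).aemeasurable hwm2
        (fun η => mul_pos (wta_pos ha _) (wta_pos ha _))
      rw [← lint_supp (shell_meas _) (F := fun η => ‖h η‖ₑ * ‖h (ξ - η)‖ₑ)
        (fun x hx => by rw [hs x (fun hx' => hx hx'.1)]; simp)] at b2
      calc ‖G ξ‖ₑ ^ 2 ≤ _ := pow_le_pow_left₀ zero_le b1 2
        _ ≤ _ := b2
        _ ≤ _ := by
          refine mul_le_mul' (H a ha ξ hξ) ((setLIntegral_le_lintegral _ _).trans (le_of_eq ?_))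
          congr 1
          ext η
          simp only [hFdef]
          rw [ENNReal.ofReal_mul (wta_pos ha _).le]
          ring
    · have : ∫⁻ η, ‖h η‖ₑ * ‖h (ξ - η)‖ₑ = 0 := by
        have hme : AEMeasurable (fun η => ‖h η‖ₑ * ‖h (ξ - η)‖ₑ) volume :=
          (hm.enorm.mul (hm.comp (measurable_const.sub measurable_id)).enorm).aemeasurable
        rw [lintegral_eq_zero_iff' hme]
        refine Eventually.of_forall fun η => ?_
        by_contra hne
        simp only [Pi.zero_apply, mul_eq_zero, not_or, enorm_eq_zero] at hne
        have h1 : η ∈ Shell (n+1) ∩ Orth s := by by_contra hc; exact hne.1 (hs _ hc)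
        have h2 : ξ - η ∈ Shell (n+1) ∩ Orth s := by by_contra hc; exact hne.2 (hs _ hc)
        have h3 := orth_norm h1.2 h2.2
        have h4 := (shell_norm h1.1).2
        simp only [add_sub_cancel] at h3
        apply hξ
        rw [div_le_iff₀ (by positivity)]
        have : (1:ℝ) ^ 2 ≤ (‖ξ‖ * (4 * Real.pi)) ^ 2 := by nlinarith [Real.pi_pos, sq_nonneg Real.pi]
        exact (pow_le_pow_iff_left₀ (by norm_num) (by positivity) (by norm_num)).1 this
      rw [this] at b1
      have : ‖G ξ‖ₑ = 0 := le_antisymm b1 zero_le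
      rw [this]
      simp
  have GL2 : ∫⁻ ξ, ‖G ξ‖ₑ ^ 2 ≤ ENNReal.ofReal (C / a ^ 2) * (∫⁻ x, F x) ^ 2 := by
    refine (lintegral_mono pt).trans ?_
    rw [lintegral_const_mul' _ _ ENNReal.ofReal_ne_top]
    refine mul_le_mul' le_rfl (le_of_eq ?_)
    rw [lintegral_lintegral_swap]
    · have : ∀ η, ∫⁻ ξ, F η * F (ξ - η) = F η * ∫⁻ x, F x := by
        intro η
        have hme : Measurable (fun ξ => F (ξ - η)) := hFm.comp (measurable_id.sub_const η)
        rw [lintegral_const_mul _ hme, lintegral_sub_right_eq_self]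
      simp only [this]
      rw [lintegral_mul_const _ hFm, sq]
    · exact ((hFm.comp measurable_snd).mul (hFm.comp (measurable_fst.sub measurable_snd))).aemeasurable
  have hG2 : MemLp G 2 volume := by
    refine ⟨hGi.aestronglyMeasurable, ?_⟩
    have h1 : eLpNorm G 2 volume ^ 2 < ⊤ := by
      rw [← eLp_sq]
      exact GL2.trans_lt (ENNReal.mul_lt_top ENNReal.ofReal_lt_top (ENNReal.pow_lt_top hW))
    by_contra hc
    rw [not_lt, top_le_iff] at hc
    rw [hc] at h1
    simp at h1
  obtain ⟨w, hw⟩ := FT_exists hG2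
  have e : ∫⁻ x, ‖u x‖ₑ ^ 4 = ∫⁻ x, ‖w x‖ₑ ^ 2 := by
    refine lintegral_congr_ae ?_
    filter_upwards [hF.L1 hi, hw.L1 hGi] with x h1 h2
    rw [h2, hG, Real.fourier_mul_convolution_eq hi hi, h1, enorm_mul]
    ring
  rw [e, hw.lint]
  exact GL2

/-! ### Part 6: the `L^{2σ+2}` bound -/

open FourierTransform SchwartzMap

lemma sqrt_rpow_two {x : ℝ} (hx : 0 ≤ x) (σ : ℝ) : Real.sqrt x ^ (2 * σ) = x ^ σ := by
  rw [Real.sqrt_eq_rpow, ← Real.rpow_mul hx]; congr 1; ring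

lemma low_piece (N : ℕ) (hN : 1 ≤ N) (σ : ℝ) (hσ1 : 1 ≤ σ) (hσ : 4 / (N : ℝ) < σ) (A : ℝ) (hA : 0 < A) :
    ∃ C > 0, ∀ a, 0 < a → a ≤ A → ∀ m > 0, ∀ (s : Fin N → Bool) (h u : Esp N → ℂ), Measurable h → FT h u →
    (∀ x, x ∉ Shell N ∩ Orth s → h x = 0) →
    ∫⁻ x, ENNReal.ofReal (wt x ^ 2 + a ^ 2) * ‖h x‖ₑ ^ 2 ≤ ENNReal.ofReal (2 * a ^ 2 * m) →
    ∫⁻ x, ‖h x‖ₑ ^ 2 ≤ ENNReal.ofReal m →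
    ∫⁻ x, ‖u x‖ₑ ^ (2 * σ + 2) ≤ ENNReal.ofReal (C * (a ^ 2 * m ^ (σ + 1))) := by
  obtain ⟨C1, hC1, H1⟩ := shell_sup N hN
  by_cases h2 : 2 ≤ σ
  · refine ⟨C1 ^ σ * A ^ (σ - 2), by positivity, fun a ha haA m hm s h u hme hF hs hW hM => ?_⟩
    obtain ⟨hi, hb⟩ := H1 a ha m hm h u hme hF (fun x hx => hs x fun hx' => hx hx'.1) hW
    have hI := interp_bound (r := 2) (q := 2 * σ + 2) (by linarith) (by norm_num) hb
    refine hI.trans ?_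
    have e : ∫⁻ x, ‖u x‖ₑ ^ (2:ℝ) = ∫⁻ x, ‖h x‖ₑ ^ 2 := by
      rw [← hF.lint]; norm_num
    rw [e, ENNReal.ofReal_rpow_of_nonneg (by positivity) (by linarith)]
    refine (mul_le_mul' le_rfl hM).trans ?_
    rw [← ENNReal.ofReal_mul (by positivity)]
    apply ENNReal.ofReal_le_ofReal
    rw [show 2 * σ + 2 - 2 = 2 * σ by ring, sqrt_rpow_two (by positivity),
      Real.mul_rpow (by positivity) hm.le, Real.mul_rpow hC1.le ha.le, Real.rpow_add hm, Real.rpow_one]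
    have e1 : a ^ σ ≤ A ^ (σ - 2) * a ^ 2 := by
      calc a ^ σ = a ^ (σ - 2) * a ^ 2 := by
            rw [← Real.rpow_natCast, ← Real.rpow_add ha]; congr 1; push_cast; ring
        _ ≤ _ := by gcongr
    calc C1 ^ σ * a ^ σ * m ^ σ * m ≤ C1 ^ σ * (A ^ (σ - 2) * a ^ 2) * m ^ σ * m := by gcongr
      _ = _ := by ring
  · have hN3 : 3 ≤ N := by
      by_contra hc
      have : (N : ℝ) ≤ 2 := by exact_mod_cast (by omega : N ≤ 2)
      have hN0 : (0:ℝ) < N := by exact_mod_cast hN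
      rw [div_lt_iff₀ hN0] at hσ
      push Not at h2
      nlinarith
    obtain ⟨C2, hC2, H2⟩ := orth_L4 N hN3
    refine ⟨4 * C2 * C1 ^ (σ - 1) * A ^ (σ - 1), by positivity, fun a ha haA m hm s h u hme hF hs hW hM => ?_⟩
    obtain ⟨hi, hb⟩ := H1 a ha m hm h u hme hF (fun x hx => hs x fun hx' => hx hx'.1) hW
    have hL4 := H2 a ha s h u hme hF hs hi (hW.trans_lt ENNReal.ofReal_lt_top)
    have hI := interp_bound (r := 4) (q := 2 * σ + 2) (by linarith) (by norm_num) hb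
    refine hI.trans ?_
    have e : ∫⁻ x, ‖u x‖ₑ ^ (4:ℝ) = ∫⁻ x, ‖u x‖ₑ ^ 4 := by
      congr 1; ext x; rw [← ENNReal.rpow_natCast]; norm_num
    rw [e, ENNReal.ofReal_rpow_of_nonneg (by positivity) (by linarith)]
    refine (mul_le_mul' le_rfl (hL4.trans (mul_le_mul' le_rfl (pow_le_pow_left₀ zero_le hW 2)))).trans ?_
    rw [← ENNReal.ofReal_pow (by positivity), ← ENNReal.ofReal_mul (by positivity), ← ENNReal.ofReal_mul (by positivity)]
    apply ENNReal.ofReal_le_ofReal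
    rw [show 2 * σ + 2 - 4 = 2 * (σ - 1) by ring, sqrt_rpow_two (by positivity),
      Real.mul_rpow (by positivity) hm.le, Real.mul_rpow hC1.le ha.le]
    have e2 : m ^ (σ + 1) = m ^ (σ - 1) * m ^ 2 := by
      rw [← Real.rpow_natCast, ← Real.rpow_add hm]; congr 1; push_cast; ring
    have e1 : a ^ (σ - 1) ≤ A ^ (σ - 1) := Real.rpow_le_rpow ha.le haA (by linarith)
    rw [e2]
    calc C1 ^ (σ - 1) * a ^ (σ - 1) * m ^ (σ - 1) * (C2 / a ^ 2 * (2 * a ^ 2 * m) ^ 2)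
        = 4 * C2 * C1 ^ (σ - 1) * a ^ (σ - 1) * (a ^ 2 * (m ^ (σ - 1) * m ^ 2)) := by
          field_simp; ring
      _ ≤ _ := by gcongr

/-! ### Part 7: a subcritical Sobolev inequality -/

open FourierTransform SchwartzMap

lemma FT_meas {N : ℕ} {h w : Esp N → ℂ} (hF : FT h w) {S : Set (Esp N)} (hS : MeasurableSet S) :
    ∃ w1 w2, FT (S.indicator h) w1 ∧ FT (Sᶜ.indicator h) w2 ∧ w =ᵐ[volume] w1 + w2 := by
  obtain ⟨w1, h1⟩ := FT_exists (hF.mg.indicator hS)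
  obtain ⟨w2, h2⟩ := FT_exists (hF.mg.indicator hS.compl)
  refine ⟨w1, w2, h1, h2, hF.uniq_u ?_⟩
  have := h1.add h2
  rwa [Set.indicator_self_add_compl] at this

lemma sob_level (N : ℕ) (s : ℝ) (hs : 0 < s) (hsN : (N : ℝ) - 4 < s) : ∃ C > 0, ∀ T ≥ 1, ∀ X > 0,
    ∀ h w : Esp N → ℂ, Measurable h → FT h w →
    ∫⁻ x, ENNReal.ofReal ((1 + ‖x‖ ^ 2) ^ 2) * ‖h x‖ₑ ^ 2 ≤ ENNReal.ofReal (X ^ 2) →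
    volume {x | 2 * Real.sqrt (C * T ^ (s / 2) * X ^ 2) < ‖w x‖} ≤
      ENNReal.ofReal (1 / (T ^ 2 * (C * T ^ (s / 2)))) := by
  have hIntg : Integrable (fun x : Esp N => (1 + ‖x‖ ^ 2) ^ (-(4 + s) / 2)) :=
    integrable_rpow_neg_one_add_norm_sq (by simp; linarith)
  set I := ∫ x : Esp N, (1 + ‖x‖ ^ 2) ^ (-(4 + s) / 2)
  have hI : 0 ≤ I := integral_nonneg fun x => by positivity
  refine ⟨I + 1, by positivity, fun T hT X hX h w hm hF hX2 => ?_⟩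
  have hT0 : 0 < T := by linarith
  set C := I + 1
  have hC : 0 < C := by positivity
  set B := Real.sqrt (C * T ^ (s / 2) * X ^ 2) with hB
  have hB2 : B ^ 2 = C * T ^ (s / 2) * X ^ 2 := Real.sq_sqrt (by positivity)
  have hB0 : 0 < B := by positivity
  let S : Set (Esp N) := {x | 1 + ‖x‖ ^ 2 < T}
  have hS : MeasurableSet S := measurableSet_lt (by fun_prop) (by fun_prop)
  obtain ⟨w1, w2, h1, h2, hw⟩ := FT_meas hF hS
  have hL1 : ∫⁻ x, ‖S.indicator h x‖ₑ ≤ ENNReal.ofReal B := by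
    rw [← ENNReal.pow_le_pow_left_iff (n := 2) (by norm_num), ← ENNReal.ofReal_pow hB0.le, hB2]
    rw [lint_supp hS (F := fun x => ‖S.indicator h x‖ₑ) (fun x hx => by simp [hx])]
    refine (cs_weight (volume.restrict S) (w := fun x => (1 + ‖x‖ ^ 2) ^ 2) (hm.indicator hS).enorm.aemeasurable
      (by fun_prop) (fun x => by positivity)).trans ?_
    rw [ENNReal.ofReal_mul (by positivity)]
    refine mul_le_mul' ?_ ?_
    · calc ∫⁻ x in S, ENNReal.ofReal (1 / (1 + ‖x‖ ^ 2) ^ 2)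
          ≤ ∫⁻ x in S, ENNReal.ofReal (T ^ (s / 2) * (1 + ‖x‖ ^ 2) ^ (-(4 + s) / 2)) := by
            refine setLIntegral_mono' hS fun x hx => ENNReal.ofReal_le_ofReal ?_
            have hy : 0 < 1 + ‖x‖ ^ 2 := by positivity
            have e : (1 + ‖x‖ ^ 2) ^ (-(4 + s) / 2) = 1 / (1 + ‖x‖ ^ 2) ^ 2 * ((1 + ‖x‖ ^ 2) ^ (s / 2))⁻¹ := by
              rw [← Real.rpow_neg hy.le, one_div, ← Real.rpow_natCast (1 + ‖x‖ ^ 2) 2, ← Real.rpow_neg hy.le,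
                ← Real.rpow_add hy]
              congr 1; push_cast; ring
            rw [e]
            have h3 : (1 + ‖x‖ ^ 2) ^ (s / 2) ≤ T ^ (s / 2) := Real.rpow_le_rpow hy.le (le_of_lt hx) (by positivity)
            calc 1 / (1 + ‖x‖ ^ 2) ^ 2 = (1 + ‖x‖ ^ 2) ^ (s / 2) * (1 / (1 + ‖x‖ ^ 2) ^ 2 * ((1 + ‖x‖ ^ 2) ^ (s / 2))⁻¹) := by
                  field_simp
              _ ≤ _ := by gcongr
        _ ≤ ∫⁻ x : Esp N, ENNReal.ofReal (T ^ (s / 2) * (1 + ‖x‖ ^ 2) ^ (-(4 + s) / 2)) := setLIntegral_le_lintegral _ _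
        _ = ENNReal.ofReal (T ^ (s / 2) * I) := by
            rw [← ofReal_integral_eq_lintegral_ofReal (hIntg.const_mul _) (Eventually.of_forall fun x => by positivity),
              integral_const_mul]
        _ ≤ _ := by
            apply ENNReal.ofReal_le_ofReal
            rw [mul_comm]
            gcongr
            simp [C]
    · refine ((setLIntegral_le_lintegral _ _).trans (lintegral_mono fun x => ?_)).trans hX2
      by_cases hx : x ∈ S <;> simp [hx]
  have hi1 : Integrable (S.indicator h) :=
    ⟨(hm.indicator hS).aestronglyMeasurable, hL1.trans_lt ENNReal.ofReal_lt_top⟩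
  have hb1 : ∀ᵐ x, ‖w1 x‖ ≤ B := by
    filter_upwards [h1.bound hi1] with x hx
    refine hx.trans ?_
    rw [← ENNReal.ofReal_le_ofReal_iff hB0.le, ofReal_integral_norm_eq_lintegral_enorm hi1]
    exact hL1
  have hL2 : ∫⁻ x, ‖w2 x‖ₑ ^ 2 ≤ ENNReal.ofReal (X ^ 2 / T ^ 2) := by
    rw [h2.lint]
    calc ∫⁻ x, ‖Sᶜ.indicator h x‖ₑ ^ 2
        ≤ ∫⁻ x, ENNReal.ofReal (1 / T ^ 2) * (ENNReal.ofReal ((1 + ‖x‖ ^ 2) ^ 2) * ‖h x‖ₑ ^ 2) := by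
          refine lintegral_mono fun x => ?_
          by_cases hx : x ∈ S
          · simp [hx]
          · have hx' : T ≤ 1 + ‖x‖ ^ 2 := not_lt.1 hx
            simp only [Set.mem_compl_iff, hx, not_false_eq_true, Set.indicator_of_mem]
            rw [← mul_assoc, ← ENNReal.ofReal_mul (by positivity)]
            refine le_mul_of_one_le_left' ?_
            rw [ENNReal.one_le_ofReal, one_div_mul_eq_div, one_le_div (by positivity)]
            gcongr
      _ ≤ _ := by
          rw [lintegral_const_mul' _ _ ENNReal.ofReal_ne_top]
          refine (mul_le_mul' le_rfl hX2).trans (le_of_eq ?_)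
          rw [← ENNReal.ofReal_mul (by positivity)]
          congr 1; field_simp
  have hm2 := mul_meas_ge_le_lintegral₀ (μ := (volume : Measure (Esp N))) (f := fun x => ‖w2 x‖ₑ ^ 2)
    (h2.mu.aestronglyMeasurable.enorm.pow_const 2) (ENNReal.ofReal (B ^ 2))
  have hsub : volume {x | 2 * B < ‖w x‖} ≤ volume {x | ENNReal.ofReal (B ^ 2) ≤ ‖w2 x‖ₑ ^ 2} := by
    apply measure_mono_ae
    filter_upwards [hw, hb1] with x e1 e2 (e3 : 2 * B < ‖w x‖)
    show ENNReal.ofReal (B ^ 2) ≤ ‖w2 x‖ₑ ^ 2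
    rw [e1] at e3
    have := norm_add_le (w1 x) (w2 x)
    simp only [Pi.add_apply] at e3
    rw [← ofReal_norm, ← ENNReal.ofReal_pow (by positivity)]
    apply ENNReal.ofReal_le_ofReal
    have : B ≤ ‖w2 x‖ := by linarith
    gcongr
  refine hsub.trans ?_
  have h3 := hm2.trans hL2
  have hne : ENNReal.ofReal (B ^ 2) ≠ 0 := by simp [hB0.ne']
  rw [mul_comm, ← ENNReal.le_div_iff_mul_le (Or.inl hne) (Or.inl ENNReal.ofReal_ne_top),
    ← ENNReal.ofReal_div_of_pos (by positivity)] at h3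
  refine h3.trans (ENNReal.ofReal_le_ofReal (le_of_eq ?_))
  rw [hB2]
  field_simp

lemma sob (N : ℕ) (σ : ℝ) (hσ : 0 < σ) (hsub : N ≤ 4 ∨ (5 ≤ N ∧ σ < 4 / ((N : ℝ) - 4))) :
    ∃ C > 0, ∀ X > 0, ∀ h w : Esp N → ℂ, Measurable h → FT h w →
    ∫⁻ x, ENNReal.ofReal ((1 + ‖x‖ ^ 2) ^ 2) * ‖h x‖ₑ ^ 2 ≤ ENNReal.ofReal (X ^ 2) →
    ∫⁻ x, ‖w x‖ₑ ^ (2 * σ + 2) ≤ ENNReal.ofReal (C * X ^ (2 * σ + 2)) := by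
  obtain ⟨s, hs, hsN, hsσ⟩ : ∃ s : ℝ, 0 < s ∧ (N : ℝ) - 4 < s ∧ s < 4 / σ := by
    have hp : 0 < 4 / σ := by positivity
    have hlt : (N : ℝ) - 4 < 4 / σ := by
      rcases hsub with h | ⟨h, h'⟩
      · have : (N : ℝ) ≤ 4 := by exact_mod_cast h
        linarith
      · have : (5 : ℝ) ≤ N := by exact_mod_cast h
        rw [lt_div_iff₀ (by linarith)] at h'
        rw [lt_div_iff₀ hσ]
        linarith
    obtain ⟨s, h1, h2⟩ := exists_between (max_lt hp hlt)
    exact ⟨s, (le_max_left _ _).trans_lt h1, (le_max_right _ _).trans_lt h1, h2⟩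
  obtain ⟨C, hC, H⟩ := sob_level N s hs hsN
  set r : ℝ := 2 ^ (2 * σ - 8 / s) with hr
  have hr0 : 0 < r := by positivity
  have hr1 : r < 1 := by
    apply Real.rpow_lt_one_of_one_lt_of_neg (by norm_num)
    rw [lt_div_iff₀ hσ] at hsσ
    have : 2 * σ < 8 / s := by rw [lt_div_iff₀ hs]; linarith
    linarith
  set Λ := 2 * Real.sqrt C with hΛ
  have hΛ0 : 0 < Λ := by positivity
  refine ⟨Λ ^ (2 * σ) + (2 * Λ) ^ (2 * σ + 2) / C * (1 - r)⁻¹,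
    add_pos (by positivity) (mul_pos (by positivity) (inv_pos.2 (by linarith))), fun X hX h w0 hm hF0 hX2 => ?_⟩
  -- pass to a measurable representative
  obtain ⟨w, hwm, hww⟩ := hF0.mu.aestronglyMeasurable
  have hF : FT h w := hF0.congr (ae_eq_refl _) hww
  rw [lintegral_congr_ae (g := fun x => ‖w x‖ₑ ^ (2 * σ + 2)) (hww.mono fun x hx => by simp only [hx])]
  let E : ℕ → Set (Esp N) := fun k => {x | 2 ^ k * (Λ * X) < ‖w x‖}
  have hE : ∀ k, MeasurableSet (E k) := fun k => measurableSet_lt measurable_const hwm.measurable.norm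
  have hEv : ∀ k, volume (E k) ≤ ENNReal.ofReal (1 / C * ((2:ℝ) ^ (- 2 - 8 / s)) ^ k) := by
    intro k
    have h1 := H ((2:ℝ) ^ (4 * k / s)) (Real.one_le_rpow (by norm_num) (by positivity)) X hX h w hm hF hX2
    have e0 : ((2:ℝ) ^ (4 * k / s)) ^ (s / 2) = (2 ^ k) ^ 2 := by
      rw [← Real.rpow_mul (by norm_num), ← pow_mul, ← Real.rpow_natCast]
      congr 1; push_cast; field_simp; ring
    have e1 : 2 * Real.sqrt (C * ((2:ℝ) ^ (4 * k / s)) ^ (s / 2) * X ^ 2) = 2 ^ k * (Λ * X) := by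
      rw [e0, mul_assoc, ← mul_pow, Real.sqrt_mul hC.le, Real.sqrt_sq (by positivity)]
      simp only [hΛ]; ring
    rw [e1, e0] at h1
    refine h1.trans (ENNReal.ofReal_le_ofReal (le_of_eq ?_))
    have e2 : ((2:ℝ) ^ (- 2 - 8 / s)) ^ k = (((2:ℝ) ^ (4 * k / s)) ^ 2 * (2 ^ k) ^ 2)⁻¹ := by
      rw [← pow_mul, ← Real.rpow_natCast, ← Real.rpow_natCast, ← Real.rpow_natCast, ← Real.rpow_mul (by norm_num),
        ← Real.rpow_mul (by norm_num), ← Real.rpow_add (by norm_num), ← Real.rpow_neg (by norm_num)]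
      congr 1; push_cast; field_simp; ring
    rw [e2]
    field_simp
  have pt : ∀ x, ‖w x‖ₑ ^ (2 * σ + 2) ≤ ENNReal.ofReal ((Λ * X) ^ (2 * σ)) * ‖w x‖ₑ ^ 2
      + ∑' k, (E k).indicator (fun _ => ENNReal.ofReal ((2 ^ (k + 1) * (Λ * X)) ^ (2 * σ + 2))) x := by
    intro x
    have hwx : ‖w x‖ₑ = ENNReal.ofReal ‖w x‖ := (ofReal_norm _).symm
    by_cases hx : ‖w x‖ ≤ Λ * X
    · refine le_add_right ?_
      rw [hwx, ENNReal.ofReal_rpow_of_nonneg (norm_nonneg _) (by linarith), ← ENNReal.ofReal_pow (norm_nonneg _),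
        ← ENNReal.ofReal_mul (by positivity)]
      apply ENNReal.ofReal_le_ofReal
      rw [Real.rpow_add_of_nonneg (norm_nonneg _) (by positivity) (by norm_num), Real.rpow_two]
      gcongr
    · push Not at hx
      refine le_add_left ?_
      obtain ⟨k, hk1, hk2⟩ : ∃ k : ℕ, 2 ^ k * (Λ * X) < ‖w x‖ ∧ ‖w x‖ ≤ 2 ^ (k + 1) * (Λ * X) := by
        have hex : ∃ n : ℕ, ‖w x‖ ≤ 2 ^ n * (Λ * X) := by
          obtain ⟨n, hn⟩ := pow_unbounded_of_one_lt (‖w x‖ / (Λ * X)) (by norm_num : (1:ℝ) < 2)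
          exact ⟨n, by rw [div_lt_iff₀ (by positivity)] at hn; exact hn.le⟩
        classical
        have hn0 : Nat.find hex ≠ 0 := by
          intro h0
          have := Nat.find_spec hex
          rw [h0] at this
          simp at this
          linarith
        obtain ⟨k, hk⟩ := Nat.exists_eq_succ_of_ne_zero hn0
        refine ⟨k, ?_, ?_⟩
        · exact not_le.1 (Nat.find_min hex (by omega))
        · have := Nat.find_spec hex
          rw [hk] at this
          exact this
      refine le_trans ?_ (ENNReal.le_tsum k)
      rw [Set.indicator_of_mem (show x ∈ E k from hk1), hwx, ENNReal.ofReal_rpow_of_nonneg (norm_nonneg _) (by linarith)]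
      apply ENNReal.ofReal_le_ofReal
      gcongr
  refine (lintegral_mono pt).trans ?_
  rw [lintegral_add_left (by have := hwm.measurable; fun_prop), lintegral_const_mul' _ _ ENNReal.ofReal_ne_top,
    lintegral_tsum (fun k => (measurable_const.indicator (hE k)).aemeasurable)]
  have b1 : ∫⁻ x, ‖w x‖ₑ ^ 2 ≤ ENNReal.ofReal (X ^ 2) := by
    rw [hF.lint]
    refine le_trans (lintegral_mono fun x => ?_) hX2
    refine le_mul_of_one_le_left' ?_
    rw [ENNReal.one_le_ofReal]
    exact one_le_pow₀ (by nlinarith [norm_nonneg x])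
  have b2 : ∑' k, ∫⁻ x, (E k).indicator (fun _ => ENNReal.ofReal ((2 ^ (k + 1) * (Λ * X)) ^ (2 * σ + 2))) x
      ≤ ENNReal.ofReal ((2 * Λ) ^ (2 * σ + 2) / C * (1 - r)⁻¹ * X ^ (2 * σ + 2)) := by
    calc _ ≤ ∑' k : ℕ, ENNReal.ofReal ((2 * Λ) ^ (2 * σ + 2) / C * X ^ (2 * σ + 2) * r ^ k) := by
          refine ENNReal.tsum_le_tsum fun k => ?_
          rw [lintegral_indicator_const (hE k)]
          refine (mul_le_mul' le_rfl (hEv k)).trans ?_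
          rw [← ENNReal.ofReal_mul (by positivity)]
          refine ENNReal.ofReal_le_ofReal (le_of_eq ?_)
          have e3 : (2 ^ (k + 1) * (Λ * X)) ^ (2 * σ + 2)
              = ((2:ℝ) ^ (2 * σ + 2)) ^ k * ((2 * Λ) ^ (2 * σ + 2) * X ^ (2 * σ + 2)) := by
            rw [show (2:ℝ) ^ (k + 1) * (Λ * X) = 2 ^ k * (2 * Λ * X) by ring,
              Real.mul_rpow (by positivity) (by positivity), Real.mul_rpow (by positivity) hX.le]
            congr 1
            rw [← Real.rpow_natCast, ← Real.rpow_natCast, ← Real.rpow_mul (by norm_num), ← Real.rpow_mul (by norm_num)]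
            congr 1; ring
          have e4 : r ^ k = ((2:ℝ) ^ (2 * σ + 2)) ^ k * ((2:ℝ) ^ (- 2 - 8 / s)) ^ k := by
            rw [hr, ← mul_pow, ← Real.rpow_add (by norm_num)]
            congr 2; ring
          rw [e3, e4]
          field_simp
      _ = _ := by
          rw [← ENNReal.ofReal_tsum_of_nonneg (fun k => by positivity)
            ((summable_geometric_of_lt_one hr0.le hr1).mul_left _), tsum_mul_left, tsum_geometric_of_lt_one hr0.le hr1]
          congr 1; ring
  refine (add_le_add (mul_le_mul' le_rfl b1) b2).trans ?_
  rw [← ENNReal.ofReal_mul (by positivity), ← ENNReal.ofReal_add (by positivity)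
    (mul_nonneg (mul_nonneg (by positivity) (inv_nonneg.2 (by linarith))) (by positivity))]
  refine ENNReal.ofReal_le_ofReal (le_of_eq ?_)
  rw [Real.mul_rpow hΛ0.le hX.le, add_mul, Real.rpow_add hX (2 * σ) 2, Real.rpow_two]
  ring

/-! ### Part 8: the combined bound -/

open FourierTransform SchwartzMap

lemma high_wt {N : ℕ} {x : Esp N} (hx : x ∉ Shell N) : (1 + ‖x‖ ^ 2) ^ 2 ≤ 25 * wt x ^ 2 := by
  have h1 : 1 / 2 ≤ |wt x| := by simpa [Shell] using hx
  have h2 : 4 * Real.pi ^ 2 * ‖x‖ ^ 2 - 1 ≤ |wt x| := le_abs_self _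
  have h3 : ‖x‖ ^ 2 ≤ 4 * Real.pi ^ 2 * ‖x‖ ^ 2 := by
    have : 1 ≤ 4 * Real.pi ^ 2 := by nlinarith [Real.pi_gt_three]
    nlinarith [sq_nonneg ‖x‖]
  have h4 : 1 + ‖x‖ ^ 2 ≤ 5 * |wt x| := by linarith
  calc (1 + ‖x‖ ^ 2) ^ 2 ≤ (5 * |wt x|) ^ 2 := by gcongr
    _ = _ := by rw [mul_pow, sq_abs]; norm_num

lemma full_bound (N : ℕ) (hN : 1 ≤ N) (σ : ℝ) (hσ1 : 1 ≤ σ) (hσ : 4 / (N : ℝ) < σ)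
    (hsub : N ≤ 4 ∨ (5 ≤ N ∧ σ < 4 / ((N : ℝ) - 4))) (A : ℝ) (hA : 0 < A) :
    ∃ C > 0, ∀ a, 0 < a → a ≤ A → ∀ m > 0, ∀ (g u : Esp N → ℂ), FT g u →
    ∫⁻ x, ENNReal.ofReal (wt x ^ 2) * ‖g x‖ₑ ^ 2 ≤ ENNReal.ofReal (a ^ 2 * m) →
    ∫⁻ x, ‖g x‖ₑ ^ 2 ≤ ENNReal.ofReal m →
    ∫⁻ x, ‖u x‖ₑ ^ (2 * σ + 2) ≤ ENNReal.ofReal (C * (a ^ 2 * m ^ (σ + 1))) := by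
  obtain ⟨C1, hC1, H1⟩ := low_piece N hN σ hσ1 hσ A hA
  obtain ⟨C2, hC2, H2⟩ := sob N σ (by linarith) hsub
  set n : ℝ := ((Finset.univ : Finset (Fin N → Bool)).card : ℝ) with hn
  have hn0 : 0 < n := by
    rw [hn]; exact_mod_cast Finset.card_pos.2 Finset.univ_nonempty
  have hq1 : 1 ≤ 2 * σ + 2 := by linarith
  refine ⟨2 ^ (2 * σ + 2 - 1) * (n ^ (2 * σ + 2 - 1) * (n * C1) + C2 * 5 ^ (2 * σ + 2) * A ^ (2 * σ)),
    by positivity, fun a ha haA m hm g0 u hF0 hW0 hM0 => ?_⟩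
  obtain ⟨g, hgm, hgg⟩ := hF0.mg.aestronglyMeasurable
  have hF : FT g u := hF0.congr hgg (ae_eq_refl _)
  rw [lintegral_congr_ae (g := fun x => ENNReal.ofReal (wt x ^ 2) * ‖g x‖ₑ ^ 2)
    (hgg.mono fun x hx => by simp only [hx])] at hW0
  rw [lintegral_congr_ae (g := fun x => ‖g x‖ₑ ^ 2) (hgg.mono fun x hx => by simp only [hx])] at hM0
  have hgm' := hgm.measurable
  have hwm : Measurable (fun x : Esp N => ENNReal.ofReal (wt x ^ 2)) := (wt_cont.pow 2).measurable.ennreal_ofReal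
  have hWa : ∫⁻ x, ENNReal.ofReal (wt x ^ 2 + a ^ 2) * ‖g x‖ₑ ^ 2 ≤ ENNReal.ofReal (2 * a ^ 2 * m) := by
    have : ∀ x : Esp N, ENNReal.ofReal (wt x ^ 2 + a ^ 2) * ‖g x‖ₑ ^ 2
        = ENNReal.ofReal (wt x ^ 2) * ‖g x‖ₑ ^ 2 + ENNReal.ofReal (a ^ 2) * ‖g x‖ₑ ^ 2 := by
      intro x
      rw [ENNReal.ofReal_add (by positivity) (by positivity), add_mul]
    simp only [this]
    have hme : Measurable (fun x => ENNReal.ofReal (wt x ^ 2) * ‖g x‖ₑ ^ 2) := hwm.mul (hgm'.enorm.pow_const 2)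
    rw [lintegral_add_left hme, lintegral_const_mul' _ _ ENNReal.ofReal_ne_top]
    refine (add_le_add hW0 (mul_le_mul' le_rfl hM0)).trans (le_of_eq ?_)
    rw [← ENNReal.ofReal_mul (by positivity), ← ENNReal.ofReal_add (by positivity) (by positivity)]
    congr 1; ring
  -- pieces
  have hSm : ∀ s : Fin N → Bool, MeasurableSet (Shell N ∩ Orth s) := fun s => (shell_meas N).inter (orth_meas s)
  have hex : ∀ s : Fin N → Bool, ∃ v, FT ((Shell N ∩ Orth s).indicator g) v := fun s =>
    FT_exists (hF.mg.indicator (hSm s))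
  choose v hv using hex
  obtain ⟨w, hw⟩ := FT_exists (hF.mg.indicator (shell_meas N).compl)
  have hdec : (∑ s, (Shell N ∩ Orth s).indicator g) + (Shell N)ᶜ.indicator g = g := by
    ext x
    rw [Pi.add_apply, Finset.sum_apply]
    by_cases hx : x ∈ Shell N
    · rw [Finset.sum_eq_single (fun i => decide (0 ≤ x i))]
      · have : x ∈ Shell N ∩ Orth (fun i => decide (0 ≤ x i)) := ⟨hx, fun i => by simp⟩
        simp [hx, this]
      · intro s _ hs
        apply Set.indicator_of_notMem
        rintro ⟨-, h2⟩
        apply hs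
        ext i
        have := h2 i
        rw [Bool.eq_iff_iff, this]
        simp
      · simp
    · rw [Finset.sum_eq_zero]
      · simp [hx]
      · intro s _
        apply Set.indicator_of_notMem
        exact fun h => hx h.1
  have hu : u =ᵐ[volume] (∑ s, v s) + w := by
    refine hF.uniq_u ?_
    have := (FT_sum Finset.univ hv).add hw
    rwa [hdec] at this
  have hind : ∀ (S : Set (Esp N)) (x : Esp N), ‖S.indicator g x‖ₑ ≤ ‖g x‖ₑ := by
    intro S x
    by_cases hx : x ∈ S <;> simp [hx]
  have bv : ∀ s, ∫⁻ x, ‖v s x‖ₑ ^ (2 * σ + 2) ≤ ENNReal.ofReal (C1 * (a ^ 2 * m ^ (σ + 1))) := by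
    intro s
    refine H1 a ha haA m hm s _ _ (hgm'.indicator (hSm s)) (hv s) (fun x hx => Set.indicator_of_notMem hx _) ?_ ?_
    · refine le_trans (lintegral_mono fun x => ?_) hWa
      gcongr
      exact hind _ x
    · refine le_trans (lintegral_mono fun x => ?_) hM0
      gcongr
      exact hind _ x
  have bw : ∫⁻ x, ‖w x‖ₑ ^ (2 * σ + 2) ≤ ENNReal.ofReal (C2 * 5 ^ (2 * σ + 2) * A ^ (2 * σ) * (a ^ 2 * m ^ (σ + 1))) := by
    refine (H2 (5 * a * Real.sqrt m) (by positivity) _ w (hgm'.indicator (shell_meas N).compl) hw ?_).trans ?_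
    · calc ∫⁻ x, ENNReal.ofReal ((1 + ‖x‖ ^ 2) ^ 2) * ‖(Shell N)ᶜ.indicator g x‖ₑ ^ 2
          ≤ ∫⁻ x, ENNReal.ofReal 25 * (ENNReal.ofReal (wt x ^ 2) * ‖g x‖ₑ ^ 2) := by
            refine lintegral_mono fun x => ?_
            by_cases hx : x ∈ Shell N
            · simp [hx]
            · simp only [Set.mem_compl_iff, hx, not_false_eq_true, Set.indicator_of_mem]
              rw [← mul_assoc, ← ENNReal.ofReal_mul (by norm_num)]
              gcongr
              exact high_wt hx
        _ ≤ _ := by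
            rw [lintegral_const_mul' _ _ ENNReal.ofReal_ne_top]
            refine (mul_le_mul' le_rfl hW0).trans (le_of_eq ?_)
            rw [← ENNReal.ofReal_mul (by norm_num), mul_pow, Real.sq_sqrt hm.le]
            congr 1; ring
    · apply ENNReal.ofReal_le_ofReal
      have e1 : Real.sqrt m ^ (2 * σ + 2) = m ^ (σ + 1) := by
        rw [show 2 * σ + 2 = 2 * (σ + 1) by ring, sqrt_rpow_two hm.le]
      have e2 : a ^ (2 * σ + 2) ≤ A ^ (2 * σ) * a ^ 2 := by
        rw [Real.rpow_add ha, Real.rpow_two]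
        gcongr
      rw [Real.mul_rpow (by positivity) (by positivity), Real.mul_rpow (by norm_num) ha.le, e1]
      calc C2 * (5 ^ (2 * σ + 2) * a ^ (2 * σ + 2) * m ^ (σ + 1))
          ≤ C2 * (5 ^ (2 * σ + 2) * (A ^ (2 * σ) * a ^ 2) * m ^ (σ + 1)) := by gcongr
        _ = _ := by ring
  have hvm : ∀ s, AEMeasurable (fun x => ‖v s x‖ₑ ^ (2 * σ + 2)) volume := fun s =>
    (hv s).mu.aestronglyMeasurable.enorm.pow_const _
  have hcard : ((Finset.univ : Finset (Fin N → Bool)).card : ENNReal) = ENNReal.ofReal n := by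
    rw [hn, ENNReal.ofReal_natCast]
  calc ∫⁻ x, ‖u x‖ₑ ^ (2 * σ + 2)
      ≤ ∫⁻ x, ENNReal.ofReal (2 ^ (2 * σ + 2 - 1)) *
          (ENNReal.ofReal (n ^ (2 * σ + 2 - 1)) * (∑ s, ‖v s x‖ₑ ^ (2 * σ + 2)) + ‖w x‖ₑ ^ (2 * σ + 2)) := by
        refine lintegral_mono_ae ?_
        filter_upwards [hu] with x hx
        rw [hx, Pi.add_apply, Finset.sum_apply]
        calc ‖∑ s, v s x + w x‖ₑ ^ (2 * σ + 2) ≤ ((∑ s, ‖v s x‖ₑ) + ‖w x‖ₑ) ^ (2 * σ + 2) := by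
              gcongr
              exact (enorm_add_le _ _).trans (add_le_add (enorm_sum_le _ _) le_rfl)
          _ ≤ 2 ^ (2 * σ + 2 - 1) * ((∑ s, ‖v s x‖ₑ) ^ (2 * σ + 2) + ‖w x‖ₑ ^ (2 * σ + 2)) :=
              ENNReal.rpow_add_le_mul_rpow_add_rpow _ _ hq1
          _ ≤ _ := by
              have e2 : (2 : ENNReal) ^ (2 * σ + 2 - 1) = ENNReal.ofReal (2 ^ (2 * σ + 2 - 1)) := by
                rw [← ENNReal.ofReal_rpow_of_nonneg (by norm_num) (by linarith)]
                norm_num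
              rw [e2]
              have := ENNReal.rpow_sum_le_const_mul_sum_rpow Finset.univ (fun s => ‖v s x‖ₑ) hq1
              rw [hcard, ENNReal.ofReal_rpow_of_nonneg hn0.le (by linarith)] at this
              gcongr
    _ = ENNReal.ofReal (2 ^ (2 * σ + 2 - 1)) * (ENNReal.ofReal (n ^ (2 * σ + 2 - 1)) * 
          (∑ s, ∫⁻ x, ‖v s x‖ₑ ^ (2 * σ + 2)) + ∫⁻ x, ‖w x‖ₑ ^ (2 * σ + 2)) := by
        rw [lintegral_const_mul' _ _ ENNReal.ofReal_ne_top, lintegral_add_left', lintegral_const_mul' _ _ ENNReal.ofReal_ne_top,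
          lintegral_finsetSum' _ fun s _ => hvm s]
        exact (Finset.aemeasurable_fun_sum _ fun s _ => hvm s).const_mul _
    _ ≤ ENNReal.ofReal (2 ^ (2 * σ + 2 - 1)) * (ENNReal.ofReal (n ^ (2 * σ + 2 - 1)) * 
          (ENNReal.ofReal n * ENNReal.ofReal (C1 * (a ^ 2 * m ^ (σ + 1)))) +
          ENNReal.ofReal (C2 * 5 ^ (2 * σ + 2) * A ^ (2 * σ) * (a ^ 2 * m ^ (σ + 1)))) := by
        have : (∑ s, ∫⁻ x, ‖v s x‖ₑ ^ (2 * σ + 2)) ≤ ENNReal.ofReal n * ENNReal.ofReal (C1 * (a ^ 2 * m ^ (σ + 1))) := by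
          rw [← hcard, ← nsmul_eq_mul]
          exact Finset.sum_le_card_nsmul _ _ _ fun s _ => bv s
        gcongr
    _ = _ := by
        rw [← ENNReal.ofReal_mul (by positivity), ← ENNReal.ofReal_mul (by positivity),
          ← ENNReal.ofReal_add (by positivity) (by positivity), ← ENNReal.ofReal_mul (by positivity)]
        congr 1; ring

/-! ### Part 9: lower bounds for the energy -/

open FourierTransform SchwartzMap

lemma H2.quad {N : ℕ} (U : H2 N) (t : ℝ) : 0 ≤ U.lapSq - 2 * t * U.gradSq + t ^ 2 * U.massSq := by
  obtain ⟨g, hg, i1, i2, e1, e2⟩ := U.fourier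
  have i0 : Integrable (fun ξ => ‖g ξ‖ ^ 2) := hg.mg.integrable_norm_pow (by norm_num)
  have i3 : Integrable (fun ξ : Esp N => (4 * Real.pi ^ 2 * ‖ξ‖ ^ 2) ^ 2 * ‖g ξ‖ ^ 2
      - 2 * t * (4 * Real.pi ^ 2 * ‖ξ‖ ^ 2 * ‖g ξ‖ ^ 2)) := i2.sub (i1.const_mul _)
  rw [e1, e2, H2.massSq, hg.int, ← integral_const_mul, ← integral_const_mul, ← integral_sub i2 (i1.const_mul _),
    ← integral_add i3 (i0.const_mul _)]
  refine integral_nonneg fun ξ => ?_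
  simp only [Pi.zero_apply]
  have : (4 * Real.pi ^ 2 * ‖ξ‖ ^ 2) ^ 2 * ‖g ξ‖ ^ 2 - 2 * t * (4 * Real.pi ^ 2 * ‖ξ‖ ^ 2 * ‖g ξ‖ ^ 2) + t ^ 2 * ‖g ξ‖ ^ 2
    = (4 * Real.pi ^ 2 * ‖ξ‖ ^ 2 - t) ^ 2 * ‖g ξ‖ ^ 2 := by ring
  rw [this]
  positivity

lemma H2.shellQuad {N : ℕ} (U : H2 N) : ∃ g : Esp N → ℂ, FT g U.u ∧
    ∫⁻ x, ENNReal.ofReal (wt x ^ 2) * ‖g x‖ₑ ^ 2 = ENNReal.ofReal (U.lapSq - 2 * U.gradSq + U.massSq) ∧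
    ∫⁻ x, ‖g x‖ₑ ^ 2 = ENNReal.ofReal U.massSq := by
  obtain ⟨g, hg, i1, i2, e1, e2⟩ := U.fourier
  have i0 : Integrable (fun ξ => ‖g ξ‖ ^ 2) := hg.mg.integrable_norm_pow (by norm_num)
  have en : ∀ x, ‖g x‖ₑ ^ 2 = ENNReal.ofReal (‖g x‖ ^ 2) := fun x => by
    rw [← ofReal_norm, ENNReal.ofReal_pow (norm_nonneg _)]
  refine ⟨g, hg, ?_, ?_⟩
  · have i3 : Integrable (fun ξ : Esp N => (4 * Real.pi ^ 2 * ‖ξ‖ ^ 2) ^ 2 * ‖g ξ‖ ^ 2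
        - 2 * (4 * Real.pi ^ 2 * ‖ξ‖ ^ 2 * ‖g ξ‖ ^ 2)) := i2.sub (i1.const_mul _)
    rw [e1, e2, H2.massSq, hg.int, ← integral_const_mul, ← integral_sub i2 (i1.const_mul _),
      ← integral_add i3 i0]
    have e : (fun ξ : Esp N => (4 * Real.pi ^ 2 * ‖ξ‖ ^ 2) ^ 2 * ‖g ξ‖ ^ 2
        - 2 * (4 * Real.pi ^ 2 * ‖ξ‖ ^ 2 * ‖g ξ‖ ^ 2) + ‖g ξ‖ ^ 2) = fun ξ => wt ξ ^ 2 * ‖g ξ‖ ^ 2 := by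
      ext ξ; unfold wt; ring
    have ii := (i2.sub (i1.const_mul 2)).add i0
    have ii' : Integrable (fun ξ : Esp N => wt ξ ^ 2 * ‖g ξ‖ ^ 2) := by rw [← e]; exact ii
    rw [e, ofReal_integral_eq_lintegral_ofReal ii' (Eventually.of_forall fun x => by positivity)]
    congr 1
    ext x
    rw [en, ENNReal.ofReal_mul (by positivity)]
  · rw [H2.massSq, hg.int, ofReal_integral_eq_lintegral_ofReal i0 (Eventually.of_forall fun x => by positivity)]
    simp only [en]

lemma pPow_nonneg {N : ℕ} (σ : ℝ) (U : H2 N) : 0 ≤ U.pPow σ := integral_nonneg fun x => by positivity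

lemma pPow_le {N : ℕ} (σ : ℝ) (U : H2 N) (hσ : 0 < σ) {B : ℝ} (hB : 0 ≤ B)
    (h : ∫⁻ x, ‖U.u x‖ₑ ^ (2 * σ + 2) ≤ ENNReal.ofReal B) : U.pPow σ ≤ B := by
  have hm : AEStronglyMeasurable (fun x => ‖U.u x‖ ^ (2 * σ + 2)) volume :=
    (U.u_mem.aestronglyMeasurable.norm.aemeasurable.pow_const _).aestronglyMeasurable
  rw [H2.pPow, integral_eq_lintegral_of_nonneg_ae (Eventually.of_forall fun x => by positivity) hm]
  refine ENNReal.toReal_le_of_le_ofReal hB (le_trans (le_of_eq ?_) h)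
  congr 1
  ext x
  rw [← ofReal_norm, ENNReal.ofReal_rpow_of_nonneg (norm_nonneg _) (by linarith)]

/-- The constant `κ` in `p/(σ+1) ≤ κ ∫|Δu|²`. -/
def kap (N : ℕ) (σ : ℝ) : ℝ := 8 / ((N : ℝ) * σ * ((N : ℝ) * σ - 2))

lemma kap_lt {N : ℕ} {σ : ℝ} (h : 4 < (N : ℝ) * σ) : kap N σ < 1 ∧ 0 < kap N σ := by
  unfold kap
  have : 8 < (N : ℝ) * σ * ((N : ℝ) * σ - 2) := by nlinarith
  exact ⟨by rw [div_lt_one (by linarith)]; exact this, div_pos (by norm_num) (by linarith)⟩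

lemma Dfun_kap {N : ℕ} {σ : ℝ} (h : 4 < (N : ℝ) * σ) (hσ : 0 < σ) {U : H2 N} (hD : 0 < Dfun σ U) :
    1 / (σ + 1) * U.pPow σ < kap N σ * U.lapSq := by
  unfold Dfun at hD
  unfold kap
  have h8 : 0 < (N : ℝ) * σ * ((N : ℝ) * σ - 2) := by nlinarith
  have e : (N : ℝ) * σ / (4 * (σ + 1)) * ((N : ℝ) * σ / 2 - 1) * U.pPow σ
    = (N : ℝ) * σ * ((N : ℝ) * σ - 2) / 8 * (1 / (σ + 1) * U.pPow σ) := by field_simp; ring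
  rw [e] at hD
  rw [show 8 / ((N : ℝ) * σ * ((N : ℝ) * σ - 2)) * U.lapSq = 8 * U.lapSq / ((N : ℝ) * σ * ((N : ℝ) * σ - 2)) by ring,
    lt_div_iff₀ h8]
  linarith

lemma energy_lower {N : ℕ} {σ : ℝ} (h : 4 < (N : ℝ) * σ) (hσ : 0 < σ) {U : H2 N} (hD : 0 < Dfun σ U) :
    - (U.massSq / (1 - kap N σ)) ≤ U.energy σ := by
  have h1 := Dfun_kap h hσ hD
  obtain ⟨k1, k0⟩ := kap_lt h
  have hk : 0 < 1 - kap N σ := by linarith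
  have h2 := U.quad (1 / (1 - kap N σ))
  have h3 : 0 ≤ (1 - kap N σ) * (U.lapSq - 2 * (1 / (1 - kap N σ)) * U.gradSq + (1 / (1 - kap N σ)) ^ 2 * U.massSq) :=
    mul_nonneg hk.le h2
  have e : (1 - kap N σ) * (U.lapSq - 2 * (1 / (1 - kap N σ)) * U.gradSq + (1 / (1 - kap N σ)) ^ 2 * U.massSq)
    = (1 - kap N σ) * U.lapSq - 2 * U.gradSq + U.massSq / (1 - kap N σ) := by field_simp
  rw [e] at h3
  unfold H2.energy
  linarith

lemma energy_small_mass (N : ℕ) (hN : 1 ≤ N) (σ : ℝ) (hσ1 : 1 ≤ σ) (hσ : 4 / (N : ℝ) < σ)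
    (hsub : N ≤ 4 ∨ (5 ≤ N ∧ σ < 4 / ((N : ℝ) - 4))) :
    ∃ m₀ > 0, ∀ U : H2 N, 0 < Dfun σ U → 0 < U.massSq → U.massSq ≤ m₀ → - U.massSq ≤ U.energy σ := by
  have hN0 : (0:ℝ) < N := by exact_mod_cast hN
  have hNσ : 4 < (N : ℝ) * σ := by rw [div_lt_iff₀ hN0] at hσ; linarith
  have hσ0 : 0 < σ := by linarith
  obtain ⟨k1, k0⟩ := kap_lt hNσ
  have hk : 0 < 1 - kap N σ := by linarith
  obtain ⟨C, hC, H⟩ := full_bound N hN σ hσ1 hσ hsub (2 / (1 - kap N σ)) (by positivity)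
  refine ⟨((σ + 1) / (2 * C)) ^ (1 / σ), by positivity, fun U hD hm0 hm => ?_⟩
  by_contra hE
  push Not at hE
  have h1 := Dfun_kap hNσ hσ0 hD
  set m := U.massSq
  set p := 1 / (σ + 1) * U.pPow σ with hp
  have hA := U.quad 1
  have hEe : U.energy σ = U.lapSq - 2 * U.gradSq - p := rfl
  have hp0 : 0 < p := by linarith
  have hΔ : U.lapSq ≤ 4 * m / (1 - kap N σ) ^ 2 := by
    have h2 := U.quad (2 / (1 - kap N σ))
    have h3 : (1 - kap N σ) * U.lapSq < 2 * U.gradSq := by linarith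
    have h4 : 2 * (2 / (1 - kap N σ)) * U.gradSq = (2 / (1 - kap N σ)) * (2 * U.gradSq) := by ring
    have h5 : (2 / (1 - kap N σ)) * ((1 - kap N σ) * U.lapSq) ≤ (2 / (1 - kap N σ)) * (2 * U.gradSq) := by gcongr
    have h6 : (2 / (1 - kap N σ)) * ((1 - kap N σ) * U.lapSq) = 2 * U.lapSq := by field_simp
    have h7 : (2 / (1 - kap N σ)) ^ 2 * U.massSq = 4 * m / (1 - kap N σ) ^ 2 := by simp only [m]; rw [div_pow]; ring
    linarith
  have hΔ0 : 0 ≤ U.lapSq := integral_nonneg fun x => by positivity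
  have hpm : p / m ≤ (2 / (1 - kap N σ)) ^ 2 := by
    rw [div_le_iff₀ hm0]
    have : (2 / (1 - kap N σ)) ^ 2 * m = 4 * m / (1 - kap N σ) ^ 2 := by rw [div_pow]; ring
    nlinarith
  set a := Real.sqrt (p / m) with ha
  have ha2 : a ^ 2 = p / m := Real.sq_sqrt (by positivity)
  have ha0 : 0 < a := by positivity
  have haA : a ≤ 2 / (1 - kap N σ) := Real.sqrt_le_iff.2 ⟨by positivity, hpm⟩
  obtain ⟨g, hg, e1, e2⟩ := U.shellQuad
  have hb := H a ha0 haA m hm0 g U.u hg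
    (by rw [e1]; apply ENNReal.ofReal_le_ofReal; rw [ha2, div_mul_cancel₀ _ hm0.ne']; linarith) e2.le
  have hle := pPow_le σ U hσ0 (by positivity) hb
  rw [ha2, Real.rpow_add hm0, Real.rpow_one] at hle
  have e3 : C * (p / m * (m ^ σ * m)) = p * (C * m ^ σ) := by field_simp
  rw [e3] at hle
  have hms : m ^ σ ≤ (σ + 1) / (2 * C) := by
    calc m ^ σ ≤ (((σ + 1) / (2 * C)) ^ (1 / σ)) ^ σ := Real.rpow_le_rpow hm0.le hm hσ0.le
      _ = _ := by rw [← Real.rpow_mul (by positivity), one_div_mul_cancel hσ0.ne', Real.rpow_one]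
  have e4 : U.pPow σ = (σ + 1) * p := by rw [hp]; field_simp
  rw [e4] at hle
  have e5 : C * m ^ σ ≤ (σ + 1) / 2 := by
    calc C * m ^ σ ≤ C * ((σ + 1) / (2 * C)) := by gcongr
      _ = _ := by field_simp
  nlinarith

/-! ### Part 10: Schwartz functions in `H²` -/

open FourierTransform SchwartzMap

lemma schwartz_weak {N : ℕ} (f : 𝓢(Esp N, ℂ)) (i : Fin N) : IsWeakPDeriv f i (pderivC i f) := by
  intro φ hφ
  let ψ : 𝓢(Esp N, ℂ) := hφ.2.toSchwartzMap hφ.1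
  have hψ : φ = ψ := rfl
  rw [hψ, pderivC_schwartz, pderivC_schwartz]
  exact SchwartzMap.integral_mul_lineDerivOp_right_eq_neg_left f ψ _

lemma exists_H2 {N : ℕ} (f : 𝓢(Esp N, ℂ)) : ∃ U : H2 N, U.u = f := by
  have key : ∀ i, pderivC i (pderivC i f) = (LineDeriv.lineDerivOp (EuclideanSpace.single i (1:ℝ))
      (LineDeriv.lineDerivOp (EuclideanSpace.single i (1:ℝ)) f : 𝓢(Esp N, ℂ)) : 𝓢(Esp N, ℂ)) := fun i => by
    rw [pderivC_schwartz, pderivC_schwartz]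
  have hm : ∀ i, MemLp (pderivC i (pderivC i f)) 2 volume := fun i => by
    rw [key]; exact memLp_schwartz _
  have hm1 : ∀ i, MemLp (pderivC i f) 2 volume := fun i => by
    rw [pderivC_schwartz]; exact memLp_schwartz _
  refine ⟨⟨f, fun i => pderivC i f, lapC f, memLp_schwartz f, hm1, ?_, schwartz_weak f, ?_⟩, rfl⟩
  · exact memLp_finsetSum Finset.univ (fun i _ => hm i)
  · intro φ hφ
    have hφi : ∀ i, TestFun (pderivC i φ) := fun i => testFun_pderivC i hφ
    have hφii : ∀ i, TestFun (pderivC i (pderivC i φ)) := fun i => testFun_pderivC i (hφi i)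
    have mem : ∀ θ : Esp N → ℂ, TestFun θ → MemLp θ 2 volume := fun θ h => by
      have := memLp_schwartz (h.2.toSchwartzMap h.1); exact this
    unfold lapC
    simp only [Finset.mul_sum, Finset.sum_mul]
    rw [integral_finsetSum _ (fun i _ => integrable_mul_L2 (memLp_schwartz f) (mem _ (hφii i))),
      integral_finsetSum _ (fun i _ => integrable_mul_L2 (hm i) (mem _ hφ))]
    refine Finset.sum_congr rfl fun i _ => ?_
    rw [schwartz_weak f i _ (hφi i)]
    have h2 := schwartz_weak (LineDeriv.lineDerivOp (EuclideanSpace.single i (1:ℝ)) f : 𝓢(Esp N, ℂ)) i φ hφ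
    rw [← pderivC_schwartz] at h2
    rw [h2, neg_neg]

lemma exists_H2_fourier {N : ℕ} (g : 𝓢(Esp N, ℂ)) : ∃ U : H2 N, U.u = (𝓕 (g : Esp N → ℂ)) ∧
    U.massSq = ∫ ξ, ‖g ξ‖ ^ 2 ∧
    Integrable (fun ξ => (4 * Real.pi ^ 2 * ‖ξ‖ ^ 2) * ‖g ξ‖ ^ 2) ∧
    Integrable (fun ξ => (4 * Real.pi ^ 2 * ‖ξ‖ ^ 2) ^ 2 * ‖g ξ‖ ^ 2) ∧
    U.gradSq = ∫ ξ, (4 * Real.pi ^ 2 * ‖ξ‖ ^ 2) * ‖g ξ‖ ^ 2 ∧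
    U.lapSq = ∫ ξ, (4 * Real.pi ^ 2 * ‖ξ‖ ^ 2) ^ 2 * ‖g ξ‖ ^ 2 := by
  obtain ⟨U, hU⟩ := exists_H2 (𝓕 g : 𝓢(Esp N, ℂ))
  obtain ⟨g', hg, i1, i2, e1, e2⟩ := U.fourier
  have hae : g' =ᵐ[volume] g := hg.uniq_g (locInt_L2 (memLp_schwartz g)) fun ψ => by
    rw [hU]; exact SchwartzMap.integral_fourier_mul_eq g ψ
  have h1 : (fun ξ => (4 * Real.pi ^ 2 * ‖ξ‖ ^ 2) * ‖g' ξ‖ ^ 2) =ᵐ[volume]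
    (fun ξ => (4 * Real.pi ^ 2 * ‖ξ‖ ^ 2) * ‖g ξ‖ ^ 2) := hae.mono fun x hx => by simp only [hx]
  have h2 : (fun ξ => (4 * Real.pi ^ 2 * ‖ξ‖ ^ 2) ^ 2 * ‖g' ξ‖ ^ 2) =ᵐ[volume]
    (fun ξ => (4 * Real.pi ^ 2 * ‖ξ‖ ^ 2) ^ 2 * ‖g ξ‖ ^ 2) := hae.mono fun x hx => by simp only [hx]
  have h0 : (fun ξ => ‖g' ξ‖ ^ 2) =ᵐ[volume] (fun ξ => ‖g ξ‖ ^ 2) := hae.mono fun x hx => by simp only [hx]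
  refine ⟨U, ?_, ?_, i1.congr h1, i2.congr h2, by rw [e1, integral_congr_ae h1], by rw [e2, integral_congr_ae h2]⟩
  · rw [hU]; exact SchwartzMap.fourier_coe g
  · rw [H2.massSq, hg.int, integral_congr_ae h0]

/-- The smooth cut-off on the line. -/
def chi : ContDiffBump (0 : ℝ) := ⟨1 / 2, 1, by norm_num, by norm_num⟩

/-- The profile concentrated on the shell. -/
def prof {N : ℕ} (ε : ℝ) (ξ : Esp N) : ℝ := chi (wt ξ / ε)

lemma prof_nonneg {N : ℕ} (ε : ℝ) (ξ : Esp N) : 0 ≤ prof ε ξ := chi.nonneg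
lemma prof_le_one {N : ℕ} (ε : ℝ) (ξ : Esp N) : prof ε ξ ≤ 1 := chi.le_one

lemma prof_supp {N : ℕ} {ε : ℝ} (hε : 0 < ε) {ξ : Esp N} (h : prof ε ξ ≠ 0) : |wt ξ| < ε := by
  have : wt ξ / ε ∈ Function.support chi := h
  rw [chi.support_eq] at this
  have h2 : |wt ξ / ε| < 1 := by
    rw [mem_ball_zero_iff] at this; exact this
  rwa [abs_div, abs_of_pos hε, div_lt_one hε] at h2

lemma prof_one {N : ℕ} {ε : ℝ} (hε : 0 < ε) {ξ : Esp N} (h : |wt ξ| ≤ ε / 2) : prof ε ξ = 1 := by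
  apply chi.one_of_mem_closedBall
  have : |wt ξ / ε| ≤ 1 / 2 := by
    rw [abs_div, abs_of_pos hε, div_le_iff₀ hε]; linarith
  rw [mem_closedBall_zero_iff]; exact this

lemma prof_contDiff {N : ℕ} (ε : ℝ) : ContDiff ℝ (⊤ : ℕ∞) (prof (N := N) ε) := by
  unfold prof
  apply chi.contDiff.comp
  unfold wt
  exact ((contDiff_const.mul (contDiff_norm_sq ℝ)).sub contDiff_const).div_const ε

lemma prof_cs {N : ℕ} {ε : ℝ} (hε : 0 < ε) (hε2 : ε < 1 / 2) : HasCompactSupport (prof (N := N) ε) := by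
  refine HasCompactSupport.intro (isCompact_closedBall (0 : Esp N) 1) fun x hx => ?_
  by_contra h
  apply hx
  have := (shell_norm (x := x) (show |wt x| < 1/2 by linarith [prof_supp hε h])).1
  simpa using this

lemma prof_int {N : ℕ} {ε : ℝ} (hε : 0 < ε) (hε2 : ε < 1 / 2) : Integrable (prof (N := N) ε) :=
  (prof_contDiff ε).continuous.integrable_of_hasCompactSupport (prof_cs hε hε2)

lemma prof_sq_int {N : ℕ} {ε : ℝ} (hε : 0 < ε) (hε2 : ε < 1 / 2) : Integrable (fun x : Esp N => prof ε x ^ 2) := by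
  refine (prof_int hε hε2).mono' ((prof_contDiff ε).continuous.pow 2).aestronglyMeasurable
    (Eventually.of_forall fun x => ?_)
  rw [Real.norm_of_nonneg (by positivity)]
  have := prof_nonneg ε x; have := prof_le_one ε x
  nlinarith

lemma prof_upper (N : ℕ) (hN : 1 ≤ N) : ∃ C > 0, ∀ ε : ℝ, 0 < ε → ε < 1 / 2 → ∫ x : Esp N, prof ε x ≤ C * ε := by
  obtain ⟨C, hC, h⟩ := shell_int N hN
  refine ⟨2 * C, by positivity, fun ε h0 h1 => ?_⟩
  rw [integral_eq_lintegral_of_nonneg_ae (Eventually.of_forall (prof_nonneg ε)) (prof_int h0 h1).aestronglyMeasurable]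
  refine ENNReal.toReal_le_of_le_ofReal (by positivity) ?_
  calc ∫⁻ x : Esp N, ENNReal.ofReal (prof ε x)
      ≤ ∫⁻ x : Esp N, (Shell N).indicator (fun x => ENNReal.ofReal (2 * ε ^ 2) * ENNReal.ofReal (1 / (wt x ^ 2 + ε ^ 2))) x := by
        refine lintegral_mono fun x => ?_
        by_cases hx : prof ε x = 0
        · simp [hx]
        · have h3 := prof_supp h0 hx
          rw [Set.indicator_of_mem (show x ∈ Shell N from lt_trans h3 h1), ← ENNReal.ofReal_mul (by positivity)]
          apply ENNReal.ofReal_le_ofReal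
          refine (prof_le_one ε x).trans ?_
          have : wt x ^ 2 ≤ ε ^ 2 := sq_le_sq.2 (by rw [abs_of_pos h0]; exact h3.le)
          rw [mul_one_div, le_div_iff₀ (by positivity)]
          linarith
    _ = ENNReal.ofReal (2 * ε ^ 2) * ∫⁻ x in Shell N, ENNReal.ofReal (1 / (wt x ^ 2 + ε ^ 2)) := by
        rw [lintegral_indicator (shell_meas N), lintegral_const_mul' _ _ ENNReal.ofReal_ne_top]
    _ ≤ ENNReal.ofReal (2 * ε ^ 2) * ENNReal.ofReal (C / ε) := by gcongr; exact h ε h0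
    _ = ENNReal.ofReal (2 * C * ε) := by
        rw [← ENNReal.ofReal_mul (by positivity)]; congr 1; field_simp

lemma prof_lower (N : ℕ) (hN : 1 ≤ N) : ∃ c > 0, ∀ ε : ℝ, 0 < ε → ε < 1 / 2 → c * ε ≤ ∫ x : Esp N, prof ε x ^ 2 := by
  have hpi := Real.pi_pos
  have : Nonempty (Fin N) := ⟨⟨0, hN⟩⟩
  let V : ℝ := volume.real (Metric.ball (0 : Esp N) 1)
  have hV : 0 < V := ENNReal.toReal_pos (Metric.measure_ball_pos _ _ one_pos).ne' measure_ball_lt_top.ne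
  have hb : ∀ r : ℝ, 0 ≤ r → volume.real (Metric.ball (0 : Esp N) r) = r ^ N * V := fun r hr => by
    rw [Measure.real, Measure.addHaar_ball _ _ hr, ENNReal.toReal_mul, ENNReal.toReal_ofReal (by positivity)]
    simp [V, Measure.real]
  refine ⟨(1 / (2 * Real.pi)) ^ N * V / 8, by positivity, fun ε h0 h1 => ?_⟩
  let r := 1 / (2 * Real.pi)
  have hr : 0 < r := by positivity
  have hr2 : 4 * Real.pi ^ 2 * r ^ 2 = 1 := by simp only [r]; field_simp; norm_num
  let S := Metric.ball (0 : Esp N) (r * (1 + ε / 8)) \ Metric.ball (0 : Esp N) r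
  have hSm : MeasurableSet S := measurableSet_ball.diff measurableSet_ball
  have hS : volume.real S = ((1 + ε / 8) ^ N - 1) * (r ^ N * V) := by
    rw [measureReal_sdiff (Metric.ball_subset_ball (by nlinarith)) measurableSet_ball, hb _ (by positivity), hb _ hr.le, mul_pow]
    ring
  have hbern : 1 + (N : ℝ) * (ε / 8) ≤ (1 + ε / 8) ^ N := one_add_mul_le_pow (by linarith) N
  have hN1 : (1:ℝ) ≤ N := by exact_mod_cast hN
  have hVS : r ^ N * V / 8 * ε ≤ volume.real S := by
    rw [hS]
    have : ε / 8 ≤ (1 + ε / 8) ^ N - 1 := by nlinarith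
    calc r ^ N * V / 8 * ε = ε / 8 * (r ^ N * V) := by ring
      _ ≤ _ := by gcongr
  refine hVS.trans ?_
  have hSf : volume S ≠ ⊤ := ne_top_of_le_ne_top measure_ball_lt_top.ne (measure_mono Set.sdiff_subset)
  calc volume.real S = ∫ x in S, (1:ℝ) := by simp
    _ ≤ ∫ x in S, prof ε x ^ 2 := by
        refine setIntegral_mono_on (integrableOn_const hSf) (prof_sq_int h0 h1).integrableOn hSm fun x hx => ?_
        rw [prof_one h0, one_pow]
        have hx1 : ‖x‖ < r * (1 + ε / 8) := by simpa using hx.1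
        have hx2 : r ≤ ‖x‖ := by simpa using hx.2
        have a1 : r ^ 2 ≤ ‖x‖ ^ 2 := by gcongr
        have a2 : ‖x‖ ^ 2 ≤ (r * (1 + ε / 8)) ^ 2 := by gcongr
        have a3 : 4 * Real.pi ^ 2 * (r * (1 + ε / 8)) ^ 2 = (1 + ε / 8) ^ 2 := by rw [mul_pow, ← mul_assoc, hr2, one_mul]
        have a4 : 4 * Real.pi ^ 2 * ‖x‖ ^ 2 ≤ 4 * Real.pi ^ 2 * (r * (1 + ε / 8)) ^ 2 := by gcongr
        have a5 : 4 * Real.pi ^ 2 * r ^ 2 ≤ 4 * Real.pi ^ 2 * ‖x‖ ^ 2 := by gcongr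
        rw [abs_le]
        unfold wt
        constructor <;> nlinarith
    _ ≤ ∫ x, prof ε x ^ 2 := setIntegral_le_integral (prof_sq_int h0 h1) (Eventually.of_forall fun x => by positivity)

/-! ### Part 11: test functions -/

open FourierTransform SchwartzMap

lemma prof_fourier_lower {N : ℕ} {ε c : ℝ} (hε : 0 < ε) (hε2 : ε < 1 / 2) (hc : 0 ≤ c) {x : Esp N}
    (hx : ‖x‖ < 1 / 12) :
    c * (∫ ξ : Esp N, prof ε ξ) / 2 ≤ ‖(𝓕 (fun ξ : Esp N => ((c * prof ε ξ : ℝ) : ℂ))) x‖ := by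
  have hi : Integrable (fun ξ : Esp N => ((c * prof ε ξ : ℝ) : ℂ)) := ((prof_int hε hε2).const_mul c).ofReal
  refine le_trans ?_ (Complex.re_le_norm _)
  rw [Real.fourier_eq']
  have hii : Integrable (fun v : Esp N => Complex.exp (((-2 * Real.pi * inner ℝ v x : ℝ) : ℂ) * Complex.I)
      • ((c * prof ε v : ℝ) : ℂ)) := by
    refine (integrable_norm_iff ?_).1 ?_
    · refine Continuous.aestronglyMeasurable ?_
      have := (prof_contDiff (N := N) ε).continuous
      fun_prop
    · simp only [norm_smul, Complex.norm_exp_ofReal_mul_I, one_mul]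
      exact hi.norm
  have e := (integral_re hii)
  refine le_trans ?_ (le_of_eq e)
  have hir := hii.re
  rw [show c * (∫ ξ : Esp N, prof ε ξ) / 2 = ∫ ξ : Esp N, c / 2 * prof ε ξ by rw [integral_const_mul]; ring]
  refine integral_mono ((prof_int hε hε2).const_mul _) hir fun v => ?_
  have hre : RCLike.re (Complex.exp (((-2 * Real.pi * inner ℝ v x : ℝ) : ℂ) * Complex.I)
      • ((c * prof ε v : ℝ) : ℂ)) = Real.cos (-2 * Real.pi * inner ℝ v x) * (c * prof ε v) := by
    rw [smul_eq_mul, mul_comm]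
    change (((c * prof ε v : ℝ) : ℂ) * _).re = _
    rw [Complex.re_ofReal_mul, Complex.exp_ofReal_mul_I_re, mul_comm]
  change _ ≤ RCLike.re _
  rw [hre]
  by_cases h0 : prof ε v = 0
  · simp [h0]
  have hv : ‖v‖ ≤ 1 := (shell_norm (x := v) (show |wt v| < 1 / 2 by linarith [prof_supp hε h0])).1
  have hin : |inner ℝ v x| ≤ 1 / 12 := (abs_real_inner_le_norm v x).trans (by
    nlinarith [norm_nonneg v, norm_nonneg x])
  have hpi := Real.pi_pos
  have hcos : 1 / 2 ≤ Real.cos (-2 * Real.pi * inner ℝ v x) := by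
    rw [← Real.cos_pi_div_three, ← Real.cos_abs (-2 * Real.pi * inner ℝ v x)]
    apply Real.cos_le_cos_of_nonneg_of_le_pi (abs_nonneg _) (by linarith)
    rw [abs_mul, abs_mul, abs_of_pos hpi]
    norm_num
    nlinarith
  have := prof_nonneg ε v
  have h5 : 0 ≤ c * prof ε v := by positivity
  nlinarith

lemma test_data (N : ℕ) (hN : 1 ≤ N) (σ : ℝ) (hσ : 0 < σ) : ∃ C > 0, ∃ c > 0, ∀ m > 0, ∀ ε : ℝ, 0 < ε → ε < 1 / 2 →
    ∃ U : H2 N, U.massSq = m ∧ U.lapSq - 2 * U.gradSq + m ≤ ε ^ 2 * m ∧ U.gradSq ≤ 2 * m ∧ m / 4 ≤ U.lapSq ∧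
      c * (m * ε) ^ (σ + 1) ≤ U.pPow σ ∧ U.pPow σ ≤ C * (m * ε) ^ σ * m := by
  obtain ⟨C1, hC1, H1⟩ := prof_upper N hN
  obtain ⟨c1, hc1, H2⟩ := prof_lower N hN
  let V : ℝ := volume.real (Metric.ball (0 : Esp N) (1 / 12))
  have hV : 0 < V := ENNReal.toReal_pos (Metric.measure_ball_pos _ _ (by norm_num)).ne' measure_ball_lt_top.ne
  refine ⟨(C1 ^ 2 / c1) ^ σ, by positivity, V * (c1 / 4) ^ (σ + 1), by positivity, fun m hm ε h0 h1 => ?_⟩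
  have hU1 := H1 ε h0 h1
  have hL := H2 ε h0 h1
  set I1 := ∫ x : Esp N, prof ε x with hI1
  set I2 := ∫ x : Esp N, prof ε x ^ 2 with hI2
  have h21 : I2 ≤ I1 := integral_mono (prof_sq_int h0 h1) (prof_int h0 h1) fun x => by
    have := prof_nonneg ε x; have := prof_le_one ε x
    change prof ε x ^ 2 ≤ prof ε x
    nlinarith
  have hI2p : 0 < I2 := lt_of_lt_of_le (by positivity) hL
  have hI1p : 0 < I1 := by linarith
  let c := Real.sqrt (m / I2)
  have hc : 0 < c := by positivity
  have hc2 : c ^ 2 = m / I2 := Real.sq_sqrt (by positivity)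
  let gf : Esp N → ℂ := fun ξ => ((c * prof ε ξ : ℝ) : ℂ)
  have hg1 : ContDiff ℝ (⊤ : ℕ∞) gf := by
    have : ContDiff ℝ (⊤ : ℕ∞) (fun ξ : Esp N => c * prof ε ξ) := contDiff_const.mul (prof_contDiff ε)
    exact Complex.ofRealCLM.contDiff.comp this
  have hg2 : HasCompactSupport gf := (prof_cs h0 h1).comp_left (g := fun r : ℝ => ((c * r : ℝ) : ℂ)) (by simp)
  let g : 𝓢(Esp N, ℂ) := hg2.toSchwartzMap hg1
  have hgg : (g : Esp N → ℂ) = gf := rfl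
  obtain ⟨U, hu, hmass, i1, i2, e1, e2⟩ := exists_H2_fourier g
  have hn : ∀ ξ, ‖g ξ‖ ^ 2 = c ^ 2 * prof ε ξ ^ 2 := fun ξ => by
    rw [hgg]; simp only [gf]; rw [Complex.norm_real, Real.norm_eq_abs, sq_abs, mul_pow]
  have i0 : Integrable (fun ξ => ‖g ξ‖ ^ 2) := by simp only [hn]; exact (prof_sq_int h0 h1).const_mul _
  have hM : ∫ ξ, ‖g ξ‖ ^ 2 = m := by
    simp only [hn]; rw [integral_const_mul, hc2, ← hI2]; field_simp
  have hsupp : ∀ ξ, ‖g ξ‖ ^ 2 ≠ 0 → |wt ξ| < ε := fun ξ h => prof_supp h0 fun h' => h (by rw [hn, h']; ring)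
  have hmassm : U.massSq = m := hmass.trans hM
  -- the sup norm
  set b := c * I1 with hb
  have hb0 : 0 < b := by positivity
  have hb2 : b ^ 2 = m * I1 ^ 2 / I2 := by rw [hb, mul_pow, hc2]; ring
  have hbU : b ^ 2 ≤ C1 ^ 2 / c1 * (m * ε) := by
    rw [hb2, div_le_iff₀ hI2p]
    calc m * I1 ^ 2 ≤ m * (C1 * ε) ^ 2 := by gcongr
      _ = C1 ^ 2 / c1 * (m * ε) * (c1 * ε) := by field_simp
      _ ≤ _ := by gcongr
  have hbL : c1 * (m * ε) ≤ b ^ 2 := by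
    rw [hb2, le_div_iff₀ hI2p]
    calc c1 * (m * ε) * I2 = m * ((c1 * ε) * I2) := by ring
      _ ≤ m * (I1 * I1) := by gcongr; linarith
      _ = _ := by ring
  have hsup : ∀ x, ‖U.u x‖ ≤ b := fun x => by
    rw [hu]
    refine (VectorFourier.norm_fourierIntegral_le_integral_norm _ _ _ _ _).trans (le_of_eq ?_)
    rw [hb, hI1, ← integral_const_mul]
    congr 1
    ext ξ
    rw [hgg]; simp only [gf]
    rw [Complex.norm_real, Real.norm_of_nonneg (mul_nonneg hc.le (prof_nonneg ε ξ))]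
  have hpt : ∀ x, ‖U.u x‖ ^ (2 * σ + 2) ≤ b ^ (2 * σ) * ‖U.u x‖ ^ 2 := fun x => by
    rw [Real.rpow_add_of_nonneg (norm_nonneg _) (by linarith) (by norm_num), Real.rpow_two]
    gcongr
    exact hsup x
  have iu : Integrable (fun x => b ^ (2 * σ) * ‖U.u x‖ ^ 2) :=
    (U.u_mem.integrable_norm_pow (by norm_num)).const_mul _
  have ip : Integrable (fun x => ‖U.u x‖ ^ (2 * σ + 2)) := by
    refine iu.mono' (U.u_mem.aestronglyMeasurable.norm.aemeasurable.pow_const _).aestronglyMeasurable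
      (Eventually.of_forall fun x => ?_)
    rw [Real.norm_of_nonneg (by positivity)]
    exact hpt x
  refine ⟨U, hmassm, ?_, ?_, ?_, ?_, ?_⟩
  · have i3 : Integrable (fun ξ : Esp N => (4 * Real.pi ^ 2 * ‖ξ‖ ^ 2) ^ 2 * ‖g ξ‖ ^ 2
        - 2 * (4 * Real.pi ^ 2 * ‖ξ‖ ^ 2 * ‖g ξ‖ ^ 2)) := i2.sub (i1.const_mul _)
    rw [e1, e2, ← integral_const_mul, ← integral_sub i2 (i1.const_mul _)]
    nth_rewrite 1 [← hM]
    rw [← integral_add i3 i0, ← hM, ← integral_const_mul]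
    refine integral_mono (i3.add i0) (i0.const_mul _) fun ξ => ?_
    have e : (4 * Real.pi ^ 2 * ‖ξ‖ ^ 2) ^ 2 * ‖g ξ‖ ^ 2
        - 2 * (4 * Real.pi ^ 2 * ‖ξ‖ ^ 2 * ‖g ξ‖ ^ 2) + ‖g ξ‖ ^ 2 = wt ξ ^ 2 * ‖g ξ‖ ^ 2 := by unfold wt; ring
    change (4 * Real.pi ^ 2 * ‖ξ‖ ^ 2) ^ 2 * ‖g ξ‖ ^ 2
        - 2 * (4 * Real.pi ^ 2 * ‖ξ‖ ^ 2 * ‖g ξ‖ ^ 2) + ‖g ξ‖ ^ 2 ≤ ε ^ 2 * ‖g ξ‖ ^ 2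
    rw [e]
    by_cases h : ‖g ξ‖ ^ 2 = 0
    · rw [h]; simp
    · have : wt ξ ^ 2 ≤ ε ^ 2 := sq_le_sq.2 (by rw [abs_of_pos h0]; exact (hsupp ξ h).le)
      gcongr
  · rw [e1, ← hM, ← integral_const_mul]
    refine integral_mono i1 (i0.const_mul _) fun ξ => ?_
    change 4 * Real.pi ^ 2 * ‖ξ‖ ^ 2 * ‖g ξ‖ ^ 2 ≤ 2 * ‖g ξ‖ ^ 2
    by_cases h : ‖g ξ‖ ^ 2 = 0
    · rw [h]; simp
    · have := abs_lt.1 (hsupp ξ h)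
      unfold wt at this
      have : 4 * Real.pi ^ 2 * ‖ξ‖ ^ 2 ≤ 2 := by linarith [this.2]
      gcongr
  · rw [e2, ← hM, ← integral_div]
    refine integral_mono (i0.div_const _) i2 fun ξ => ?_
    change ‖g ξ‖ ^ 2 / 4 ≤ (4 * Real.pi ^ 2 * ‖ξ‖ ^ 2) ^ 2 * ‖g ξ‖ ^ 2
    by_cases h : ‖g ξ‖ ^ 2 = 0
    · rw [h]; simp
    · have := abs_lt.1 (hsupp ξ h)
      unfold wt at this
      have h3 : 1 / 2 ≤ 4 * Real.pi ^ 2 * ‖ξ‖ ^ 2 := by linarith [this.1]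
      have h4 : (1 / 2 : ℝ) ^ 2 ≤ (4 * Real.pi ^ 2 * ‖ξ‖ ^ 2) ^ 2 := by gcongr
      have h5 : (1 / 2 : ℝ) ^ 2 * ‖g ξ‖ ^ 2 ≤ (4 * Real.pi ^ 2 * ‖ξ‖ ^ 2) ^ 2 * ‖g ξ‖ ^ 2 := by gcongr
      linarith
  · have hbsq : (b / 2) ^ (2 * σ + 2) = (b ^ 2 / 4) ^ (σ + 1) := by
      rw [show b ^ 2 / 4 = (b / 2) ^ (2:ℝ) by rw [Real.rpow_two]; ring, ← Real.rpow_mul (by positivity)]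
      congr 1; ring
    calc V * (c1 / 4) ^ (σ + 1) * (m * ε) ^ (σ + 1) = V * (c1 * (m * ε) / 4) ^ (σ + 1) := by
          rw [mul_assoc, ← Real.mul_rpow (by positivity) (by positivity)]; congr 2; ring
      _ ≤ V * (b ^ 2 / 4) ^ (σ + 1) := by gcongr
      _ = ∫ x in Metric.ball (0 : Esp N) (1 / 12), (b / 2) ^ (2 * σ + 2) := by
          rw [setIntegral_const, smul_eq_mul, hbsq]
      _ ≤ ∫ x in Metric.ball (0 : Esp N) (1 / 12), ‖U.u x‖ ^ (2 * σ + 2) := by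
          refine setIntegral_mono_on (integrableOn_const measure_ball_lt_top.ne) ip.integrableOn
            measurableSet_ball fun x hx => ?_
          have hx' : ‖x‖ < 1 / 12 := by simpa using hx
          have := prof_fourier_lower h0 h1 hc.le hx'
          rw [hu, hgg]
          gcongr
      _ ≤ _ := setIntegral_le_integral ip (Eventually.of_forall fun x => by positivity)
  · calc U.pPow σ ≤ ∫ x, b ^ (2 * σ) * ‖U.u x‖ ^ 2 := integral_mono ip iu hpt
      _ = (b ^ 2) ^ σ * m := by
          rw [integral_const_mul, ← hmassm, H2.massSq, ← Real.rpow_two, ← Real.rpow_mul hb0.le]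
      _ ≤ (C1 ^ 2 / c1 * (m * ε)) ^ σ * m := by gcongr
      _ = _ := by rw [Real.mul_rpow (by positivity) (by positivity)]

/-! ### Part 12: membership in `O` and conclusion -/

lemma memO_of_small {N : ℕ} {σ m : ℝ} (h : 4 < (N : ℝ) * σ) (hσ : 0 < σ) (hm : 0 < m) :
    ∃ δ > 0, ∀ U : H2 N, U.massSq = m → U.gradSq ≤ 2 * m → m / 4 ≤ U.lapSq → 0 < U.pPow σ → U.pPow σ < δ →
      memO σ U := by
  set n := (N : ℝ) * σ with hn
  have hn4 : 0 < n - 4 := by linarith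
  have hn2 : 0 < n - 2 := by linarith
  have hn0 : 0 < n := by linarith
  let T := 8 * (n - 2) / (n - 4)
  have hT1 : 1 ≤ T := by
    simp only [T]; rw [le_div_iff₀ hn4]; linarith
  have hT0 : 0 < T := by linarith
  have hTs : 1 ≤ T ^ ((n - 4) / 2) := Real.one_le_rpow hT1 (by positivity)
  have hK : 0 < n * (n - 2) := by positivity
  refine ⟨2 * (σ + 1) * m / (n * (n - 2) * T ^ ((n - 4) / 2)), by positivity, fun U hmass hG hL hp hpd => ?_⟩
  have hLpos : 0 < U.lapSq := by linarith
  have hQ : T ^ ((n - 4) / 2) < 8 * (σ + 1) * U.lapSq / (n * (n - 2) * U.pPow σ) := by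
    rw [lt_div_iff₀ (by positivity)] at hpd ⊢
    nlinarith
  set Q := 8 * (σ + 1) * U.lapSq / (n * (n - 2) * U.pPow σ) with hQdef
  have hQ0 : 0 < Q := by positivity
  have hQp : Q * U.pPow σ = 8 * (σ + 1) * U.lapSq / (n * (n - 2)) := by rw [hQdef]; field_simp
  refine ⟨?_, ?_, ?_⟩
  · intro h0
    have : U.massSq = 0 := by
      rw [H2.massSq, integral_congr_ae (g := fun _ => (0:ℝ)) (h0.mono fun x hx => by simp [hx])]
      simp
    linarith
  · unfold Dfun
    rw [← hn]
    have e : n / (4 * (σ + 1)) * (n / 2 - 1) * U.pPow σ = n * (n - 2) * U.pPow σ / (8 * (σ + 1)) := by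
      field_simp; ring
    rw [e, sub_pos, div_lt_iff₀ (by positivity)]
    have h1 : 1 < Q := lt_of_le_of_lt hTs hQ
    rw [hQdef, lt_div_iff₀ (by positivity)] at h1
    linarith
  · have ht : tInfl σ U = Q ^ (2 / (n - 4)) := rfl
    set t := tInfl σ U
    have ht0 : 0 < t := by rw [ht]; positivity
    have htQ : t ^ (n / 2 - 1) = t * Q := by
      rw [show n / 2 - 1 = 1 + (n - 4) / 2 by ring, Real.rpow_add ht0, Real.rpow_one, ht, ← Real.rpow_mul hQ0.le,
        show 2 / (n - 4) * ((n - 4) / 2) = 1 by field_simp, Real.rpow_one]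
    have htT : T < t := by
      have : (T ^ ((n - 4) / 2)) ^ (2 / (n - 4)) < Q ^ (2 / (n - 4)) :=
        Real.rpow_lt_rpow (by positivity) hQ (by positivity)
      rwa [← Real.rpow_mul hT0.le, show (n - 4) / 2 * (2 / (n - 4)) = 1 by field_simp, Real.rpow_one, ← ht] at this
    have hd : HasDerivAt (phiFun σ U) (2 * t * U.lapSq - 2 * U.gradSq - n / 2 * t ^ (n / 2 - 1) / (σ + 1) * U.pPow σ) t := by
      have d1 : HasDerivAt (fun s : ℝ => s ^ 2 * U.lapSq) (2 * t * U.lapSq) t := by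
        simpa using (hasDerivAt_pow 2 t).mul_const U.lapSq
      have d2 : HasDerivAt (fun s : ℝ => 2 * s * U.gradSq) (2 * U.gradSq) t := by
        simpa using ((hasDerivAt_id t).const_mul 2).mul_const U.gradSq
      have d3 : HasDerivAt (fun s : ℝ => s ^ (n / 2) / (σ + 1) * U.pPow σ)
          (n / 2 * t ^ (n / 2 - 1) / (σ + 1) * U.pPow σ) t :=
        ((Real.hasDerivAt_rpow_const (Or.inl ht0.ne')).div_const _).mul_const _
      exact (d1.sub d2).sub d3
    rw [hd.deriv, htQ]
    have e : n / 2 * (t * Q) / (σ + 1) * U.pPow σ = 4 * t * U.lapSq / (n - 2) := by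
      rw [show n / 2 * (t * Q) / (σ + 1) * U.pPow σ = n / 2 * t / (σ + 1) * (Q * U.pPow σ) by ring, hQp]
      field_simp; norm_num
    rw [e, show 2 * t * U.lapSq - 2 * U.gradSq - 4 * t * U.lapSq / (n - 2)
      = 2 * (t * ((n - 4) / (n - 2))) * U.lapSq - 2 * U.gradSq by field_simp; ring]
    have h8 : 8 < t * ((n - 4) / (n - 2)) := by
      have : T * ((n - 4) / (n - 2)) < t * ((n - 4) / (n - 2)) := by gcongr
      have e8 : T * ((n - 4) / (n - 2)) = 8 := by simp only [T]; field_simp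
      linarith
    nlinarith

lemma test_O (N : ℕ) (hN : 1 ≤ N) (σ : ℝ) (hσ : 0 < σ) (h4 : 4 < (N : ℝ) * σ) (m : ℝ) (hm : 0 < m) :
    ∃ c > 0, ∀ᶠ ε in 𝓝[>] (0:ℝ), ∃ U : H2 N, memO σ U ∧ U.massSq = m ∧
      U.energy σ ≤ - m + ε ^ 2 * m - c * ε ^ (σ + 1) := by
  obtain ⟨C, hC, c, hc, H⟩ := test_data N hN σ hσ
  obtain ⟨δ, hδ, hO⟩ := memO_of_small h4 hσ hm
  refine ⟨1 / (σ + 1) * (c * m ^ (σ + 1)), by positivity, ?_⟩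
  have hcont : Continuous (fun ε : ℝ => C * (m * ε) ^ σ * m) := by
    have := (continuous_const.mul continuous_id : Continuous fun ε : ℝ => m * ε).rpow_const (p := σ)
      (fun x => Or.inr hσ.le)
    exact (continuous_const.mul this).mul continuous_const
  have hlim : ∀ᶠ ε in 𝓝 (0:ℝ), C * (m * ε) ^ σ * m < δ := by
    apply hcont.continuousAt.eventually_lt_const
    simp [Real.zero_rpow hσ.ne', hδ]
  have h12 : ∀ᶠ ε in 𝓝 (0:ℝ), ε < 1 / 2 := eventually_lt_nhds (by norm_num)
  filter_upwards [nhdsWithin_le_nhds hlim, nhdsWithin_le_nhds h12, self_mem_nhdsWithin] with ε h1 h2 h3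
  have h3 : 0 < ε := h3
  obtain ⟨U, u1, u2, u3, u4, u5, u6⟩ := H m hm ε h3 h2
  refine ⟨U, hO U u1 u3 u4 (lt_of_lt_of_le (by positivity) u5) (lt_of_le_of_lt u6 h1), u1, ?_⟩
  unfold H2.energy
  rw [Real.mul_rpow hm.le h3.le] at u5
  have : 1 / (σ + 1) * (c * (m ^ (σ + 1) * ε ^ (σ + 1))) ≤ 1 / (σ + 1) * U.pPow σ := by gcongr
  linarith

/-- (i) If `N ≥ 5` and `4/N < σ < 1` then `Ẽ_min(m) < -m` for every
`m > 0`. (ii) If `σ > 4/N` and `σ ≥ 1` then there is `m₀ > 0` with `Ẽ_min(m) = -m` for all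
`m ∈ (0, m₀]`. -/
theorem stmt18 (N : ℕ) (σ : ℝ) (hN : 1 ≤ N) (hσ4 : 4 / (N : ℝ) < σ)
    (hsub : N ≤ 4 ∨ (5 ≤ N ∧ σ < 4 / ((N : ℝ) - 4))) :
    ((5 ≤ N ∧ σ < 1) → ∀ m : ℝ, 0 < m → tildeE N σ m < -m) ∧
    (1 ≤ σ → ∃ m₀ : ℝ, 0 < m₀ ∧ ∀ m : ℝ, 0 < m → m ≤ m₀ → tildeE N σ m = -m) := by
  have hN0 : (0:ℝ) < N := by exact_mod_cast hN
  have h4 : 4 < (N : ℝ) * σ := by rw [div_lt_iff₀ hN0] at hσ4; linarith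
  have hσ : 0 < σ := lt_trans (by positivity) hσ4
  have hbdd : ∀ m : ℝ, BddBelow {r : ℝ | ∃ U : H2 N, memO σ U ∧ U.massSq = m ∧ r = U.energy σ} := fun m => by
    refine ⟨-(m / (1 - kap N σ)), ?_⟩
    rintro r ⟨U, hU, hUm, rfl⟩
    rw [← hUm]
    exact energy_lower h4 hσ hU.2.1
  constructor
  · rintro ⟨_, hσ1⟩ m hm
    obtain ⟨c, hc, H⟩ := test_O N hN σ hσ h4 m hm
    have hcont : Continuous (fun ε : ℝ => ε ^ (1 - σ) * m) :=
      (continuous_id.rpow_const (fun x => Or.inr (by linarith))).mul continuous_const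
    have hlim : ∀ᶠ ε in 𝓝 (0:ℝ), ε ^ (1 - σ) * m < c := by
      apply hcont.continuousAt.eventually_lt_const
      simp only [Real.zero_rpow (show 1 - σ ≠ 0 by linarith)]
      simpa using hc
    have hlim' : ∀ᶠ ε in 𝓝[>] (0:ℝ), ε ^ (1 - σ) * m < c := nhdsWithin_le_nhds hlim
    have hpos : ∀ᶠ ε in 𝓝[>] (0:ℝ), ε ∈ Set.Ioi (0:ℝ) := self_mem_nhdsWithin
    obtain ⟨ε, ⟨U, hU, hUm, hE⟩, h2, h3⟩ := (H.and (hlim'.and hpos)).exists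
    have h3 : 0 < ε := h3
    refine lt_of_le_of_lt (csInf_le (hbdd m) ⟨U, hU, hUm, rfl⟩) ?_
    have e : ε ^ 2 * m = ε ^ (1 - σ) * m * ε ^ (σ + 1) := by
      rw [mul_right_comm, ← Real.rpow_add h3, show 1 - σ + (σ + 1) = (2:ℝ) by ring, Real.rpow_two]
    have : ε ^ (1 - σ) * m * ε ^ (σ + 1) < c * ε ^ (σ + 1) := by gcongr
    linarith
  · intro hσ1
    obtain ⟨m₀, hm₀, H0⟩ := energy_small_mass N hN σ hσ1 hσ4 hsub
    refine ⟨m₀, hm₀, fun m hm hmm => ?_⟩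
    obtain ⟨c, hc, H⟩ := test_O N hN σ hσ h4 m hm
    apply le_antisymm
    · have hcont : Continuous (fun ε : ℝ => - m + ε ^ 2 * m) := by fun_prop
      have hlim : Tendsto (fun ε : ℝ => - m + ε ^ 2 * m) (𝓝[>] 0) (𝓝 (- m)) := by
        have := (hcont.tendsto 0).mono_left (nhdsWithin_le_nhds (s := Set.Ioi 0))
        simpa using this
      refine ge_of_tendsto hlim ?_
      filter_upwards [H, self_mem_nhdsWithin] with ε hε h3
      have h3 : 0 < ε := h3
      obtain ⟨U, hU, hUm, hE⟩ := hε
      refine (csInf_le (hbdd m) ⟨U, hU, hUm, rfl⟩).trans ?_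
      have : 0 < c * ε ^ (σ + 1) := by positivity
      linarith
    · obtain ⟨ε, U, hU, hUm, -⟩ := H.exists
      refine le_csInf ⟨_, U, hU, hUm, rfl⟩ ?_
      rintro r ⟨W, hW, hWm, rfl⟩
      have := H0 W hW.2.1 (by rw [hWm]; exact hm) (by rw [hWm]; exact hmm)
      rw [hWm] at this
      exact this

end
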